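/- arXiv:0810.1195 — 3 statements merged into one kernel-verified Lean document; each statement's English description precedes it below -/
import Mathlib

section
/- Let E′ > 0. For every tempered distribution F on ℝ (i.e. every continuous linear functional on the Schwartz space 𝒮(ℝ)) and every Schwartz function φ, the Parseval-type expansion holds: the series Σ_{n=0}^∞ F(ψ_n) · (∫_ℝ ψ_n(q) φ(q) dq) converges and equals F(φ). -/
open MeasureTheory Filter Complex

/-- Physicists' Hermite polynomials (real version). -/
noncomputable def hermitePolyR : ℕ → ℝ → ℝ
  | 0, _ => 1
  | 1, y => 2 * y
  | (n + 2), y => 2 * y * hermitePolyR (n + 1) y - 2 * (n + 1) * hermitePolyR n y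

/-- The `L²`-normalized Hermite (harmonic-oscillator) functions. -/
noncomputable def hermiteFn (E' : ℝ) (n : ℕ) (q : ℝ) : ℝ :=
  (E' / Real.pi) ^ ((1 : ℝ) / 4) * (Real.sqrt (2 ^ n * n.factorial))⁻¹ *
    Real.exp (-(E' * q ^ 2) / 2) * hermitePolyR n (Real.sqrt E' * q)

open SchwartzMap in
noncomputable def hexX : SchwartzMap ℝ ℂ →L[ℂ] SchwartzMap ℝ ℂ :=
  SchwartzMap.smulLeftCLM ℂ (fun x : ℝ => (x : ℂ))

lemma hexX_apply (f : SchwartzMap ℝ ℂ) (x : ℝ) : hexX f x = (x : ℂ) * f x := by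
  have h : (fun x : ℝ => (x : ℂ)).HasTemperateGrowth := by fun_prop
  simp [hexX, h]

noncomputable def hexD : SchwartzMap ℝ ℂ →L[ℂ] SchwartzMap ℝ ℂ :=
  SchwartzMap.derivCLM ℂ ℂ

lemma hexD_apply (f : SchwartzMap ℝ ℂ) (x : ℝ) : hexD f x = deriv f x := by
  simp [hexD]

/-- (rescaled) annihilation operator -/
noncomputable def hexA (E : ℝ) : SchwartzMap ℝ ℂ →L[ℂ] SchwartzMap ℝ ℂ :=
  (E : ℂ) • hexX + hexD

/-- (rescaled) creation operator -/
noncomputable def hexB (E : ℝ) : SchwartzMap ℝ ℂ →L[ℂ] SchwartzMap ℝ ℂ :=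
  (E : ℂ) • hexX - hexD

lemma hexA_apply (E : ℝ) (f : SchwartzMap ℝ ℂ) (x : ℝ) :
    hexA E f x = E * (x * f x) + deriv f x := by
  simp [hexA, hexX_apply, hexD_apply]

lemma hexB_apply (E : ℝ) (f : SchwartzMap ℝ ℂ) (x : ℝ) :
    hexB E f x = E * (x * f x) - deriv f x := by
  simp [hexB, hexX_apply, hexD_apply]

noncomputable def hexR (E : ℝ) (n : ℕ) : ℝ := Real.sqrt (2 * E * n)

lemma hexR_zero (E : ℝ) : hexR E 0 = 0 := by simp [hexR]

lemma hexR_sq (E : ℝ) (hE : 0 < E) (n : ℕ) : hexR E n * hexR E n = 2 * E * n := by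
  unfold hexR; exact Real.mul_self_sqrt (by positivity)

lemma hexPoly_succ (n : ℕ) (y : ℝ) :
    hermitePolyR (n + 1) y = 2 * y * hermitePolyR n y - 2 * n * hermitePolyR (n - 1) y := by
  cases n with
  | zero => simp [hermitePolyR]
  | succ n => simp [hermitePolyR]

lemma hexPoly_deriv (n : ℕ) (y : ℝ) :
    HasDerivAt (hermitePolyR n) (2 * n * hermitePolyR (n - 1) y) y := by
  induction n using Nat.strong_induction_on with
  | _ n ih =>
    match n with
    | 0 =>
      have : hermitePolyR 0 = fun _ => 1 := by ext; simp [hermitePolyR]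
      rw [this]; simpa using hasDerivAt_const y (1 : ℝ)
    | 1 =>
      have : hermitePolyR 1 = fun y => 2 * y := by ext; simp [hermitePolyR]
      rw [this]; simpa [hermitePolyR] using (hasDerivAt_id y).const_mul (2 : ℝ)
    | n + 2 =>
      have : hermitePolyR (n + 2) = fun y => 2 * y * hermitePolyR (n + 1) y
          - 2 * (n + 1) * hermitePolyR n y := by ext; simp [hermitePolyR]
      rw [this]
      have h1 := ih (n + 1) (by omega)
      have h0 := ih n (by omega)
      have h := (((hasDerivAt_id y).const_mul (2 : ℝ)).mul h1).sub
        (h0.const_mul (2 * ((n : ℝ) + 1)))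
      refine h.congr_deriv ?_
      have e := hexPoly_succ n y
      simp only [Nat.add_sub_cancel, id, show n + 2 - 1 = n + 1 by omega]
      rw [e]; push_cast; ring

lemma hexNorm_succ (n : ℕ) : (Real.sqrt (2 ^ n * n.factorial))⁻¹ =
    Real.sqrt (2 * (n + 1)) * (Real.sqrt (2 ^ (n + 1) * (n + 1).factorial))⁻¹ := by
  have : (2 : ℝ) ^ (n + 1) * (n + 1).factorial = (2 * (n + 1)) * (2 ^ n * n.factorial) := by
    rw [Nat.factorial_succ]; push_cast; ring
  rw [this, Real.sqrt_mul (by positivity) (2 ^ n * (n.factorial : ℝ))]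
  have : Real.sqrt (2 * ((n : ℝ) + 1)) ≠ 0 := by positivity
  rw [mul_inv, ← mul_assoc, mul_inv_cancel₀ this, one_mul]

lemma hexFn_deriv (E : ℝ) (n : ℕ) (q : ℝ) : HasDerivAt (hermiteFn E n)
    (-(E * q) * hermiteFn E n q + (E / Real.pi) ^ ((1 : ℝ) / 4) *
      (Real.sqrt (2 ^ n * n.factorial))⁻¹ * Real.exp (-(E * q ^ 2) / 2) *
      (Real.sqrt E * (2 * n * hermitePolyR (n - 1) (Real.sqrt E * q)))) q := by
  have h1 : HasDerivAt (fun q : ℝ => Real.exp (-(E * q ^ 2) / 2))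
      (Real.exp (-(E * q ^ 2) / 2) * (-(E * q))) q := by
    apply HasDerivAt.exp
    have := (((hasDerivAt_id q).pow 2).const_mul E).neg.div_const 2
    refine this.congr_deriv ?_
    simp; ring
  have h2 : HasDerivAt (fun q : ℝ => hermitePolyR n (Real.sqrt E * q))
      ((2 * n * hermitePolyR (n - 1) (Real.sqrt E * q)) * Real.sqrt E) q := by
    have := (hasDerivAt_id q).const_mul (Real.sqrt E)
    have h3 := (hexPoly_deriv n (Real.sqrt E * q)).comp q this
    rw [mul_one] at h3
    exact h3
  have h := (h1.const_mul ((E / Real.pi) ^ ((1 : ℝ) / 4) *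
      (Real.sqrt (2 ^ n * n.factorial))⁻¹)).mul h2
  refine h.congr_deriv ?_
  simp only [hermiteFn]; ring

lemma hexFn_A (E : ℝ) (hE : 0 < E) (n : ℕ) (q : ℝ) :
    E * (q * hermiteFn E n q) + deriv (hermiteFn E n) q = hexR E n * hermiteFn E (n - 1) q := by
  rw [(hexFn_deriv E n q).deriv]
  cases n with
  | zero => simp [hexR]; ring
  | succ n =>
    simp only [Nat.add_sub_cancel]
    have e : hexR E (n + 1) * Real.sqrt (2 * (n + 1)) = Real.sqrt E * (2 * (n + 1)) := by
      unfold hexR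
      rw [show 2 * E * ((n + 1 : ℕ) : ℝ) = E * (2 * (n + 1)) by push_cast; ring,
        Real.sqrt_mul hE.le, mul_assoc, Real.mul_self_sqrt (by positivity)]
    have : hexR E (n + 1) * hermiteFn E n q = (E / Real.pi) ^ ((1 : ℝ) / 4) *
      (Real.sqrt (2 ^ (n + 1) * (n + 1).factorial))⁻¹ * Real.exp (-(E * q ^ 2) / 2) *
      ((hexR E (n + 1) * Real.sqrt (2 * (n + 1))) * hermitePolyR n (Real.sqrt E * q)) := by
      simp only [hermiteFn]; rw [hexNorm_succ n]; ring
    rw [this, e]; push_cast; ring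

lemma hexFn_B (E : ℝ) (hE : 0 < E) (n : ℕ) (q : ℝ) :
    E * (q * hermiteFn E n q) - deriv (hermiteFn E n) q =
      hexR E (n + 1) * hermiteFn E (n + 1) q := by
  rw [(hexFn_deriv E n q).deriv]
  have e : Real.sqrt E * Real.sqrt (2 * (n + 1)) = hexR E (n + 1) := by
    unfold hexR
    rw [show 2 * E * ((n + 1 : ℕ) : ℝ) = E * (2 * (n + 1)) by push_cast; ring,
        Real.sqrt_mul hE.le]
  have e2 : Real.sqrt E * Real.sqrt E = E := Real.mul_self_sqrt hE.le
  simp only [hermiteFn]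
  rw [hexPoly_succ, hexNorm_succ n, ← e]
  linear_combination (- 2 * q * (E / Real.pi) ^ ((1 : ℝ) / 4) *
      (Real.sqrt (2 ^ (n + 1) * (n + 1).factorial))⁻¹ * Real.exp (-(E * q ^ 2) / 2) *
      Real.sqrt (2 * (n + 1)) * hermitePolyR n (Real.sqrt E * q)) * e2

structure HexB (E : ℝ) (Ψ : ℕ → SchwartzMap ℝ ℂ) : Prop where
  pos : 0 < E
  ann : ∀ n, hexA E (Ψ n) = (hexR E n : ℂ) • Ψ (n - 1)
  cre : ∀ n, hexB E (Ψ n) = (hexR E (n + 1) : ℂ) • Ψ (n + 1)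
  real : ∀ n x, ∃ y : ℝ, Ψ n x = (y : ℂ)
  gauss : ∃ C : ℝ, C ≠ 0 ∧ ∀ x : ℝ, Ψ 0 x = ((C * Real.exp (-(E / 2) * x ^ 2) : ℝ) : ℂ)
  norm0 : ∫ x, Ψ 0 x * Ψ 0 x = 1

lemma hex_mk (E : ℝ) (hE : 0 < E) (Ψ : ℕ → SchwartzMap ℝ ℂ)
    (hΨ : ∀ (n : ℕ) (q : ℝ), Ψ n q = ((hermiteFn E n q : ℝ) : ℂ)) : HexB E Ψ := by
  have hd : ∀ n q, deriv (Ψ n) q = ((deriv (hermiteFn E n) q : ℝ) : ℂ) := by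
    intro n q
    have : (Ψ n : ℝ → ℂ) = fun q => ((hermiteFn E n q : ℝ) : ℂ) := funext (hΨ n)
    rw [this]
    exact ((hexFn_deriv E n q).differentiableAt.hasDerivAt.ofReal_comp).deriv
  have h0 : ∀ x : ℝ, hermiteFn E 0 x =
      (E / Real.pi) ^ ((1 : ℝ) / 4) * Real.exp (-(E / 2) * x ^ 2) := by
    intro x
    simp only [hermiteFn, hermitePolyR]
    simp
    left; ring
  refine ⟨hE, ?_, ?_, fun n x => ⟨_, hΨ n x⟩, ⟨(E / Real.pi) ^ ((1 : ℝ) / 4), by positivity, ?_⟩, ?_⟩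
  · intro n; ext q
    rw [hexA_apply, hd, hΨ]
    simp only [smul_apply, hΨ, smul_eq_mul]
    exact_mod_cast hexFn_A E hE n q
  · intro n; ext q
    rw [hexB_apply, hd, hΨ]
    simp only [smul_apply, hΨ, smul_eq_mul]
    exact_mod_cast hexFn_B E hE n q
  · intro x; rw [hΨ, h0]
  · simp only [hΨ, h0]
    have : ∀ x : ℝ, (((E / Real.pi) ^ ((1 : ℝ) / 4) * Real.exp (-(E / 2) * x ^ 2) : ℝ) : ℂ) *
        (((E / Real.pi) ^ ((1 : ℝ) / 4) * Real.exp (-(E / 2) * x ^ 2) : ℝ) : ℂ) =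
        ((Real.sqrt (E / Real.pi) * Real.exp (- E * x ^ 2) : ℝ) : ℂ) := by
      intro x
      rw [← ofReal_mul]
      congr 1
      have e1 : (E / Real.pi) ^ ((1 : ℝ) / 4) * (E / Real.pi) ^ ((1 : ℝ) / 4) =
          Real.sqrt (E / Real.pi) := by
        rw [← Real.rpow_add (by positivity), Real.sqrt_eq_rpow]; norm_num
      have e2 : Real.exp (-(E / 2) * x ^ 2) * Real.exp (-(E / 2) * x ^ 2) =
        Real.exp (- E * x ^ 2) := by rw [← Real.exp_add]; congr 1; ring
      rw [← e1, ← e2]; ring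
    simp only [this]
    rw [integral_complex_ofReal, integral_const_mul, integral_gaussian, ← Real.sqrt_mul (by positivity)]
    have : E / Real.pi * (Real.pi / E) = 1 := by field_simp
    rw [this]; simp

lemma hex_mul_integrable (f g : SchwartzMap ℝ ℂ) : Integrable (fun x => f x * g x) := by
  have := (SchwartzMap.pairing (ContinuousLinearMap.mul ℝ ℂ) f g).integrable (μ := volume)
  refine this.congr (Filter.Eventually.of_forall fun x => ?_)
  simp [SchwartzMap.pairing_apply]

noncomputable def hexI (f g : SchwartzMap ℝ ℂ) : ℂ := ∫ x, f x * g x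

lemma hexI_comm (f g : SchwartzMap ℝ ℂ) : hexI f g = hexI g f := by
  simp only [hexI, mul_comm]

lemma hexI_add_right (f g h : SchwartzMap ℝ ℂ) : hexI f (g + h) = hexI f g + hexI f h := by
  simp only [hexI, add_apply, mul_add]
  exact integral_add (hex_mul_integrable f g) (hex_mul_integrable f h)

lemma hexI_smul_right (c : ℂ) (f g : SchwartzMap ℝ ℂ) : hexI f (c • g) = c * hexI f g := by
  simp only [hexI, smul_apply, smul_eq_mul, ← integral_const_mul]
  congr 1; ext x; ring

lemma hexI_smul_left (c : ℂ) (f g : SchwartzMap ℝ ℂ) : hexI (c • f) g = c * hexI f g := by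
  rw [hexI_comm, hexI_smul_right, hexI_comm]

lemma hexI_A (E : ℝ) (f g : SchwartzMap ℝ ℂ) : hexI f (hexA E g) = hexI (hexB E f) g := by
  have h1 : hexI f (hexA E g) = (∫ x, f x * ((E : ℂ) • hexX g) x) + ∫ x, f x * deriv g x := by
    have := hexI_add_right f ((E : ℂ) • hexX g) (hexD g)
    simp only [hexI, hexD_apply] at this
    exact this
  have h2 : hexI (hexB E f) g = (∫ x, ((E : ℂ) • hexX f) x * g x) - ∫ x, deriv f x * g x := by
    have e : ∀ x, hexB E f x * g x = ((E : ℂ) • hexX f) x * g x - hexD f x * g x := by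
      intro x; rw [hexB_apply, smul_apply, hexX_apply, hexD_apply, smul_eq_mul]; ring
    simp only [hexI, e]
    have := integral_sub (hex_mul_integrable ((E : ℂ) • hexX f) g) (hex_mul_integrable (hexD f) g)
    simp only [hexD_apply] at this ⊢
    exact this
  rw [h1, h2, SchwartzMap.integral_mul_deriv_eq_neg_deriv_mul, sub_eq_add_neg]
  congr 2; ext x
  simp only [smul_apply, smul_eq_mul, hexX_apply]; ring

lemma hexI_B (E : ℝ) (f g : SchwartzMap ℝ ℂ) : hexI f (hexB E g) = hexI (hexA E f) g := by
  rw [hexI_comm, ← hexI_A, hexI_comm]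

section
variable {E : ℝ} {Ψ : ℕ → SchwartzMap ℝ ℂ}

lemma HexB.coef_A (H : HexB E Ψ) (n : ℕ) (φ : SchwartzMap ℝ ℂ) :
    hexI (Ψ n) (hexA E φ) = hexR E (n + 1) * hexI (Ψ (n + 1)) φ := by
  rw [hexI_A, H.cre, hexI_smul_left]

lemma HexB.coef_B (H : HexB E Ψ) (n : ℕ) (φ : SchwartzMap ℝ ℂ) :
    hexI (Ψ n) (hexB E φ) = hexR E n * hexI (Ψ (n - 1)) φ := by
  rw [hexI_B, H.ann, hexI_smul_left]

lemma HexB.coef_BA (H : HexB E Ψ) (n : ℕ) (φ : SchwartzMap ℝ ℂ) :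
    hexI (Ψ n) (hexB E (hexA E φ)) = (2 * E * n : ℝ) * hexI (Ψ n) φ := by
  rw [H.coef_B, H.coef_A]
  cases n with
  | zero => simp [hexR_zero]
  | succ n =>
    rw [Nat.add_sub_cancel, ← hexR_sq E H.pos]; push_cast; ring

lemma HexB.BA (H : HexB E Ψ) (n : ℕ) :
    hexB E (hexA E (Ψ n)) = ((2 * E * n : ℝ) : ℂ) • Ψ n := by
  rw [H.ann, map_smul, H.cre, smul_smul]
  cases n with
  | zero => simp [hexR_zero]
  | succ n =>
    rw [Nat.add_sub_cancel, ← hexR_sq E H.pos]; push_cast; rfl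

lemma HexB.orth (H : HexB E Ψ) (n m : ℕ) (h : n ≠ m) : hexI (Ψ n) (Ψ m) = 0 := by
  have h1 := H.coef_BA n (Ψ m)
  rw [H.BA, hexI_smul_right] at h1
  have h2 : ((2 * E * ((m : ℝ) - n) : ℝ) : ℂ) * hexI (Ψ n) (Ψ m) = 0 := by
    push_cast at h1 ⊢; linear_combination h1
  rcases mul_eq_zero.mp h2 with h3 | h3
  · exfalso
    have h4 : 2 * E * ((m : ℝ) - n) = 0 := by exact_mod_cast h3
    have := H.pos
    have h5 : (m : ℝ) - n = 0 := by
      rcases mul_eq_zero.mp h4 with h | h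
      · linarith
      · exact h
    exact h (by exact_mod_cast (sub_eq_zero.mp h5).symm)
  · exact h3

lemma HexB.norm1 (H : HexB E Ψ) (n : ℕ) : hexI (Ψ n) (Ψ n) = 1 := by
  induction n with
  | zero => exact H.norm0
  | succ n ih =>
    have h1 := H.coef_B (n + 1) (Ψ n)
    rw [H.cre, hexI_smul_right, Nat.add_sub_cancel, ih] at h1
    refine mul_left_cancel₀ ?_ h1
    have : 0 < hexR E (n + 1) := by
      have := H.pos
      unfold hexR; positivity
    exact_mod_cast this.ne'

lemma HexB.integrable_sq (f : SchwartzMap ℝ ℂ) : Integrable (fun x => ‖f x‖ ^ 2) := by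
  refine (hex_mul_integrable f f).norm.congr (Filter.Eventually.of_forall fun x => ?_)
  simp [sq]

lemma HexB.int_sq (H : HexB E Ψ) (n : ℕ) : ∫ x, ‖Ψ n x‖ ^ 2 = 1 := by
  have h1 := H.norm1 n
  have : ∀ x, Ψ n x * Ψ n x = ((‖Ψ n x‖ ^ 2 : ℝ) : ℂ) := by
    intro x
    obtain ⟨y, hy⟩ := H.real n x
    rw [hy, Complex.norm_real, Real.norm_eq_abs, sq_abs]; push_cast; ring
  simp only [hexI, this] at h1
  rw [integral_complex_ofReal] at h1
  exact_mod_cast h1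

lemma hex_sup_le (G : SchwartzMap ℝ ℂ) (x : ℝ) : ‖G x‖ ≤ ∫ y, ‖deriv G y‖ := by
  have hi : Integrable (fun y => deriv G y) := by
    have := (hexD G).integrable (μ := volume)
    simpa only [hexD_apply] using (show Integrable (fun y => hexD G y) from this)
  have h := integral_Iic_of_hasDerivAt_of_tendsto' (f := G) (f' := deriv G) (a := x) (m := 0)
    (fun y _ => G.differentiableAt.hasDerivAt) hi.integrableOn
    ((zero_at_infty G).mono_left atBot_le_cocompact)
  rw [sub_zero] at h
  rw [← h]
  refine (norm_integral_le_integral_norm _).trans ?_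
  exact setIntegral_le_integral hi.norm (Filter.Eventually.of_forall fun y => norm_nonneg _)

lemma hex_sup_sq_le (f : SchwartzMap ℝ ℂ) (x : ℝ) :
    ‖f x‖ ^ 2 ≤ (∫ y, ‖f y‖ ^ 2) + ∫ y, ‖hexD f y‖ ^ 2 := by
  have h := hex_sup_le (SchwartzMap.pairing (ContinuousLinearMap.mul ℝ ℂ) f f) x
  have e : ⇑(SchwartzMap.pairing (ContinuousLinearMap.mul ℝ ℂ) f f) = fun x => f x * f x := by
    ext x; simp [SchwartzMap.pairing_apply]
  have hd : ∀ y, deriv (fun x => f x * f x) y = 2 * (f y * hexD f y) := by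
    intro y
    have h1 := (f.differentiableAt (x := y)).hasDerivAt
    have h2 : HasDerivAt (fun x => f x * f x) _ y := h1.mul h1
    rw [h2.deriv, hexD_apply]; ring
  rw [e] at h
  simp only [hd, norm_mul] at h
  rw [← integral_add (HexB.integrable_sq f) (HexB.integrable_sq _), sq]
  refine h.trans (integral_mono ?_ ((HexB.integrable_sq f).add (HexB.integrable_sq _)) ?_)
  · have := ((hex_mul_integrable f (hexD f)).norm).const_mul ‖(2 : ℂ)‖
    simpa only [norm_mul] using this
  · intro y
    simp only [Complex.norm_ofNat, Pi.add_apply]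
    nlinarith [sq_nonneg (‖f y‖ - ‖hexD f y‖)]

lemma HexB.sup (H : HexB E Ψ) : ∃ K : ℝ, 0 < K ∧ ∀ n x, ‖Ψ n x‖ ≤ K * (n + 1) := by
  have hE := H.pos
  refine ⟨1 + 2 * E, by positivity, fun n x => ?_⟩
  have h := hex_sup_sq_le (Ψ n) x
  have hD : ∀ y, ‖hexD (Ψ n) y‖ ^ 2 ≤
      (E * n) * ‖Ψ (n - 1) y‖ ^ 2 + (E * (n + 1)) * ‖Ψ (n + 1) y‖ ^ 2 := by
    intro y
    have e1 : 2 * hexD (Ψ n) y = hexR E n * Ψ (n - 1) y - hexR E (n + 1) * Ψ (n + 1) y := by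
      have ha := DFunLike.congr_fun (H.ann n) y
      have hb := DFunLike.congr_fun (H.cre n) y
      rw [hexA_apply, smul_apply, smul_eq_mul] at ha
      rw [hexB_apply, smul_apply, smul_eq_mul] at hb
      rw [← ha, ← hb, hexD_apply]; ring
    have e2 : 2 * ‖hexD (Ψ n) y‖ ≤ hexR E n * ‖Ψ (n - 1) y‖ + hexR E (n + 1) * ‖Ψ (n + 1) y‖ := by
      have e3 : 2 * ‖hexD (Ψ n) y‖ = ‖2 * hexD (Ψ n) y‖ := by simp
      rw [e3, e1]
      refine (norm_sub_le _ _).trans (le_of_eq ?_)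
      simp [hexR, abs_of_nonneg]
    have s1 := hexR_sq E hE n
    have s2 := hexR_sq E hE (n + 1)
    push_cast at s2
    have e4 : (2 * ‖hexD (Ψ n) y‖) ^ 2 ≤
        (hexR E n * ‖Ψ (n - 1) y‖ + hexR E (n + 1) * ‖Ψ (n + 1) y‖) ^ 2 := by gcongr
    have e5 : (hexR E n * ‖Ψ (n - 1) y‖ + hexR E (n + 1) * ‖Ψ (n + 1) y‖) ^ 2 ≤
      2 * ((hexR E n * hexR E n) * ‖Ψ (n - 1) y‖ ^ 2 +
        (hexR E (n + 1) * hexR E (n + 1)) * ‖Ψ (n + 1) y‖ ^ 2) := by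
      nlinarith [sq_nonneg (hexR E n * ‖Ψ (n - 1) y‖ - hexR E (n + 1) * ‖Ψ (n + 1) y‖)]
    rw [s1, s2] at e5
    linarith
  have hint : ∫ y, ‖hexD (Ψ n) y‖ ^ 2 ≤ E * n + E * (n + 1) := by
    refine (integral_mono (HexB.integrable_sq _)
      (((HexB.integrable_sq (Ψ (n - 1))).const_mul (E * n)).add
        ((HexB.integrable_sq (Ψ (n + 1))).const_mul (E * (n + 1)))) hD).trans (le_of_eq ?_)
    simp only [Pi.add_apply]
    rw [integral_add ((HexB.integrable_sq (Ψ (n - 1))).const_mul (E * n))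
        ((HexB.integrable_sq (Ψ (n + 1))).const_mul (E * (n + 1))), integral_const_mul,
        integral_const_mul, H.int_sq, H.int_sq]
    ring
  rw [H.int_sq] at h
  have hn : (0 : ℝ) ≤ n := Nat.cast_nonneg n
  refine abs_le_of_sq_le_sq' (?_ : _ ≤ _) (by positivity) |>.2
  have : 1 + (E * n + E * (n + 1)) ≤ ((1 + 2 * E) * (n + 1)) ^ 2 := by
    have : 0 ≤ E * n := by positivity
    nlinarith [mul_nonneg hE.le this, mul_nonneg this this, mul_nonneg hn hn, mul_nonneg this hn]
  linarith

lemma HexB.decay (H : HexB E Ψ) (k : ℕ) : ∀ φ : SchwartzMap ℝ ℂ, ∃ C : ℝ, 0 ≤ C ∧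
    ∀ n : ℕ, ‖hexI (Ψ n) φ‖ * ((n : ℝ) + 1) ^ k ≤ C * (n + 1) := by
  obtain ⟨K, hK, hs⟩ := H.sup
  have hE := H.pos
  induction k with
  | zero =>
    intro φ
    refine ⟨K * ∫ x, ‖φ x‖, by positivity, fun n => ?_⟩
    have hi := (φ.integrable (μ := volume)).norm
    rw [pow_zero, mul_one]
    refine (norm_integral_le_integral_norm _).trans ?_
    rw [mul_right_comm, ← integral_const_mul]
    refine integral_mono (hex_mul_integrable _ _).norm (hi.const_mul _) fun x => ?_
    simp only [norm_mul]
    gcongr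
    exact hs n x
  | succ k ih =>
    intro φ
    obtain ⟨C, hC, h⟩ := ih ((((2 * E)⁻¹ : ℝ) : ℂ) • hexB E (hexA E φ) + φ)
    refine ⟨C, hC, fun n => ?_⟩
    refine le_trans (le_of_eq ?_) (h n)
    rw [hexI_add_right, hexI_smul_right, H.coef_BA, ← mul_assoc, ← ofReal_mul]
    have : (2 * E)⁻¹ * (2 * E * (n : ℝ)) = n := by field_simp
    rw [this]
    have : ((n : ℝ) : ℂ) * hexI (Ψ n) φ + hexI (Ψ n) φ = (((n : ℝ) + 1 : ℝ) : ℂ) * hexI (Ψ n) φ := by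
      push_cast; ring
    rw [this, norm_mul, Complex.norm_real, Real.norm_of_nonneg (by positivity)]
    ring

lemma hex_bdd_mul {h : ℝ → ℂ} (hc : Continuous h) {M : ℝ} (hM : ∀ x, ‖h x‖ ≤ M)
    {g : ℝ → ℂ} (hg : Integrable g) : Integrable (fun x => h x * g x) :=
  hg.bdd_mul hc.aestronglyMeasurable (Filter.Eventually.of_forall hM)

lemma HexB.moments (H : HexB E Ψ) {h : ℝ → ℂ} (hc : Continuous h) {M : ℝ} (hM : ∀ x, ‖h x‖ ≤ M)
    (h0 : ∀ n, ∫ x, h x * Ψ n x = 0) (k : ℕ) : ∀ n, ∫ x, h x * ((hexX ^ k) (Ψ n)) x = 0 := by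
  have hE := H.pos
  induction k with
  | zero => intro n; simpa using h0 n
  | succ k ih =>
    intro n
    have e : hexX (Ψ n) = ((2 * E : ℝ) : ℂ)⁻¹ •
        ((hexR E n : ℂ) • Ψ (n - 1) + (hexR E (n + 1) : ℂ) • Ψ (n + 1)) := by
      rw [← H.ann, ← H.cre]
      ext x
      simp only [smul_apply, add_apply, hexA_apply, hexB_apply, hexX_apply, smul_eq_mul]
      have : ((2 * E : ℝ) : ℂ) ≠ 0 := by exact_mod_cast (by positivity : 2 * E ≠ 0)
      field_simp
      push_cast; ring
    have e2 : (hexX ^ (k + 1)) (Ψ n) = ((2 * E : ℝ) : ℂ)⁻¹ •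
        ((hexR E n : ℂ) • (hexX ^ k) (Ψ (n - 1)) + (hexR E (n + 1) : ℂ) • (hexX ^ k) (Ψ (n + 1))) := by
      have e0 : (hexX ^ (k + 1)) (Ψ n) = (hexX ^ k) (hexX (Ψ n)) := by rw [pow_succ]; rfl
      rw [e0, e]
      simp only [map_smul, map_add]
    rw [e2]
    have e3 : ∀ x, h x * (((2 * E : ℝ) : ℂ)⁻¹ • ((hexR E n : ℂ) • (hexX ^ k) (Ψ (n - 1)) +
        (hexR E (n + 1) : ℂ) • (hexX ^ k) (Ψ (n + 1)))) x =
        (((2 * E : ℝ) : ℂ)⁻¹ * hexR E n) * (h x * ((hexX ^ k) (Ψ (n - 1))) x) +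
        (((2 * E : ℝ) : ℂ)⁻¹ * hexR E (n + 1)) * (h x * ((hexX ^ k) (Ψ (n + 1))) x) := by
      intro x
      simp only [smul_apply, add_apply, smul_eq_mul]; ring
    simp only [e3]
    rw [integral_add ((hex_bdd_mul hc hM (SchwartzMap.integrable _)).const_mul _)
      ((hex_bdd_mul hc hM (SchwartzMap.integrable _)).const_mul _), integral_const_mul,
      integral_const_mul, ih, ih]
    simp

lemma hexX_pow_apply (k : ℕ) (f : SchwartzMap ℝ ℂ) (x : ℝ) :
    (hexX ^ k) f x = (x : ℂ) ^ k * f x := by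
  induction k generalizing f with
  | zero => simp
  | succ k ih => 
    have e0 : (hexX ^ (k + 1)) f = (hexX ^ k) (hexX f) := by rw [pow_succ]; rfl
    rw [e0, ih, hexX_apply]; ring

lemma hex_exp_integrable (hE : 0 < E) (t : ℝ) :
    Integrable (fun x : ℝ => Real.exp (|t * x|) * Real.exp (-(E / 2) * x ^ 2)) := by
  have hb : Integrable (fun x : ℝ => Real.exp (t ^ 2 / E) * Real.exp (-(E / 4) * x ^ 2)) :=
    (integrable_exp_neg_mul_sq (by positivity)).const_mul _
  refine hb.mono' (by fun_prop) (Filter.Eventually.of_forall fun x => ?_)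
  rw [Real.norm_of_nonneg (by positivity), ← Real.exp_add, ← Real.exp_add]
  apply Real.exp_le_exp.mpr
  have : |t * x| ≤ t ^ 2 / E + E / 4 * x ^ 2 := by
    rw [abs_le]
    have e1 : t ^ 2 / E + E / 4 * x ^ 2 - t * x = (t - E / 2 * x) ^ 2 / E := by field_simp; ring
    have e2 : t ^ 2 / E + E / 4 * x ^ 2 + t * x = (t + E / 2 * x) ^ 2 / E := by field_simp; ring
    have : 0 ≤ (t - E / 2 * x) ^ 2 / E := by positivity
    have : 0 ≤ (t + E / 2 * x) ^ 2 / E := by positivity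
    constructor <;> linarith
  linarith

lemma HexB.complete (H : HexB E Ψ) {h : ℝ → ℂ} (hc : Continuous h) {M : ℝ} (hM : ∀ x, ‖h x‖ ≤ M)
    (h0 : ∀ n, ∫ x, h x * Ψ n x = 0) : ∀ x, h x = 0 := by
  obtain ⟨C, hC, hg⟩ := H.gauss
  have hmom := fun k => H.moments hc hM h0 k 0
  simp only [hexX_pow_apply] at hmom
  set g : ℝ → ℂ := fun x => h x * Ψ 0 x with hgdef
  have hgc : Continuous g := hc.mul (Ψ 0).continuous
  have hgi : Integrable g := hex_bdd_mul hc hM (Ψ 0).integrable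
  have key : ∀ t : ℝ, ∫ x, cexp ((t * x : ℝ) * I) * g x = 0 := by
    intro t
    have hs := hasSum_integral_of_dominated_convergence (μ := volume)
      (F := fun (n : ℕ) (x : ℝ) => (((t * x : ℝ) : ℂ) * I) ^ n / (n.factorial : ℂ) * g x)
      (f := fun x => cexp ((t * x : ℝ) * I) * g x)
      (fun n x => |t * x| ^ n / (n.factorial : ℝ) * (M * |C| * Real.exp (-(E / 2) * x ^ 2)))
      (fun n => by fun_prop) ?_ ?_ ?_ ?_
    · have hz : ∀ n : ℕ, ∫ x : ℝ, (((t * x : ℝ) : ℂ) * I) ^ n / (n.factorial : ℂ) * g x = 0 := by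
        intro n
        have : ∀ x : ℝ, (((t * x : ℝ) : ℂ) * I) ^ n / (n.factorial : ℂ) * g x =
          ((t * I) ^ n / (n.factorial : ℂ)) * (h x * ((x : ℂ) ^ n * Ψ 0 x)) := by
          intro x; simp only [hgdef]; push_cast; ring
        simp only [this]
        rw [integral_const_mul, hmom, mul_zero]
      simp only [hz] at hs
      exact hs.unique hasSum_zero
    · intro n
      refine Filter.Eventually.of_forall fun x => ?_
      simp only [hgdef, norm_mul, norm_div, norm_pow, Complex.norm_I, mul_one, Complex.norm_real,
        Complex.norm_natCast, hg, Real.norm_eq_abs, Real.abs_exp]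
      rw [mul_assoc M, ← abs_mul]
      gcongr
      exact hM x
    · refine Filter.Eventually.of_forall fun x => ?_
      exact (Real.summable_pow_div_factorial _).mul_right _
    · have : ∀ x : ℝ, ∑' n : ℕ, |t * x| ^ n / (n.factorial : ℝ) *
          (M * |C| * Real.exp (-(E / 2) * x ^ 2)) =
          M * |C| * (Real.exp (|t * x|) * Real.exp (-(E / 2) * x ^ 2)) := by
        intro x
        rw [tsum_mul_right]
        have : ∑' n : ℕ, |t * x| ^ n / (n.factorial : ℝ) = Real.exp |t * x| := by
          rw [Real.exp_eq_exp_ℝ, NormedSpace.exp_eq_tsum_div]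
        rw [this]; ring
      simp only [this]
      exact (hex_exp_integrable H.pos t).const_mul _
    · refine Filter.Eventually.of_forall fun x => ?_
      refine HasSum.mul_right _ ?_
      rw [Complex.exp_eq_exp_ℂ]
      exact NormedSpace.expSeries_div_hasSum_exp _
  have hF : FourierTransform.fourier g = fun _ => (0 : ℂ) := by
    ext w
    rw [Real.fourier_eq']
    simp only [smul_eq_mul]
    have := key (-2 * Real.pi * w)
    rw [← this]
    congr 1; ext x; congr 3
    simp [inner]
    ring
  have hinv := hgc.fourierInv_fourier_eq hgi (by rw [hF]; exact integrable_zero _ _ _)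
  have hz : ∀ x, g x = 0 := by
    intro x
    rw [← hinv, hF]
    rw [Real.fourierInv_eq']
    simp
  intro x
  have := hz x
  simp only [hgdef, hg] at this
  rcases mul_eq_zero.mp this with h | h
  · exact h
  · exfalso
    have h2 : C * Real.exp (-(E / 2) * x ^ 2) = 0 := by exact_mod_cast h
    exact (mul_ne_zero hC (Real.exp_pos _).ne') h2

noncomputable def hexS (Ψ : ℕ → SchwartzMap ℝ ℂ) (N : ℕ) (φ : SchwartzMap ℝ ℂ) :
    SchwartzMap ℝ ℂ := ∑ n ∈ Finset.range N, hexI (Ψ n) φ • Ψ n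

lemma hexS_succ (N : ℕ) (φ : SchwartzMap ℝ ℂ) :
    hexS Ψ (N + 1) φ = hexS Ψ N φ + hexI (Ψ N) φ • Ψ N := by
  simp [hexS, Finset.sum_range_succ]

lemma HexB.comm_A (H : HexB E Ψ) (N : ℕ) (φ : SchwartzMap ℝ ℂ) :
    hexA E (hexS Ψ N φ) + ((hexR E N : ℂ) * hexI (Ψ N) φ) • Ψ (N - 1) =
      hexS Ψ N (hexA E φ) := by
  induction N with
  | zero => simp [hexS, hexR_zero]
  | succ N ih =>
    rw [hexS_succ, hexS_succ, ← ih, map_add, map_smul, H.ann, H.coef_A, smul_smul,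
      Nat.add_sub_cancel, mul_comm (hexI (Ψ N) φ)]

lemma HexB.comm_B (H : HexB E Ψ) (N : ℕ) (φ : SchwartzMap ℝ ℂ) :
    hexB E (hexS Ψ N φ) = hexS Ψ (N + 1) (hexB E φ) := by
  induction N with
  | zero => simp [hexS, H.coef_B, hexR_zero]
  | succ N ih =>
    rw [hexS_succ, hexS_succ, ← ih, map_add, map_smul, H.cre, H.coef_B, smul_smul,
      Nat.add_sub_cancel, mul_comm (hexI (Ψ N) φ)]

lemma hex_summable : Summable (fun n : ℕ => 1 / ((n : ℝ) + 1) ^ 2) := by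
  have := (summable_nat_add_iff 1).mpr (Real.summable_one_div_nat_pow (p := 2).mpr (by norm_num))
  simpa using this

lemma HexB.base (H : HexB E Ψ) (φ : SchwartzMap ℝ ℂ) :
    Tendsto (fun N => SchwartzMap.seminorm ℂ 0 0 (hexS Ψ N φ - φ)) atTop (nhds 0) := by
  obtain ⟨K, hK, hs⟩ := H.sup
  obtain ⟨C, hC, hd⟩ := H.decay 4 φ
  set u : ℕ → ℝ := fun n => K * C * (1 / ((n : ℝ) + 1) ^ 2) with hu
  have hus : Summable u := hex_summable.mul_left _
  have hb : ∀ n x, ‖hexI (Ψ n) φ * Ψ n x‖ ≤ u n := by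
    intro n x
    rw [norm_mul]
    have hp : (0 : ℝ) < (n : ℝ) + 1 := by positivity
    have h1 : ‖hexI (Ψ n) φ‖ ≤ C / ((n : ℝ) + 1) ^ 3 := by
      rw [le_div_iff₀ (by positivity)]
      have := hd n
      refine le_of_mul_le_mul_right ?_ hp
      calc _ = _ := by ring
        _ ≤ _ := this
    calc _ ≤ C / ((n : ℝ) + 1) ^ 3 * (K * (n + 1)) := by
          gcongr
          exact hs n x
      _ = u n := by simp only [hu]; field_simp
  set g : ℝ → ℂ := fun x => ∑' n, hexI (Ψ n) φ * Ψ n x with hg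
  have hgc : Continuous g :=
    continuous_tsum (fun n => continuous_const.mul (Ψ n).continuous) hus hb
  have hgb : ∀ x, ‖g x‖ ≤ ∑' n, u n := fun x => tsum_of_norm_bounded hus.hasSum (fun n => hb n x)
  have hunif := tendstoUniformly_tsum_nat hus hb
  have hcoef : ∀ m, ∫ x, g x * Ψ m x = hexI (Ψ m) φ := by
    intro m
    have hm := (Ψ m).integrable (μ := volume)
    have hsum := hasSum_integral_of_dominated_convergence (μ := volume)
      (F := fun (n : ℕ) (x : ℝ) => hexI (Ψ n) φ * Ψ n x * Ψ m x)
      (f := fun x => g x * Ψ m x)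
      (fun n x => u n * ‖Ψ m x‖)
      (fun n => ((continuous_const.mul (Ψ n).continuous).mul
        (Ψ m).continuous).aestronglyMeasurable) ?_ ?_ ?_ ?_
    · have e : ∀ n : ℕ, ∫ x, hexI (Ψ n) φ * Ψ n x * Ψ m x = hexI (Ψ n) φ * hexI (Ψ n) (Ψ m) := by
        intro n
        simp only [mul_assoc]
        rw [integral_const_mul]; rfl
      simp only [e] at hsum
      have h2 := hasSum_single (f := fun n => hexI (Ψ n) φ * hexI (Ψ n) (Ψ m)) m
        (fun n hn => by rw [H.orth n m hn, mul_zero])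
      rw [hsum.unique h2, H.norm1, mul_one]
    · intro n
      refine Filter.Eventually.of_forall fun x => ?_
      rw [norm_mul]
      gcongr
      exact hb n x
    · exact Filter.Eventually.of_forall fun x => hus.mul_right _
    · simp only [tsum_mul_right]
      exact hm.norm.const_mul _
    · refine Filter.Eventually.of_forall fun x => ?_
      exact ((Summable.of_norm_bounded hus (fun n => hb n x)).hasSum).mul_right _
  have heq : ∀ x, φ x - g x = 0 := by
    refine H.complete (h := fun x => φ x - g x) (φ.continuous.sub hgc)
      (M := SchwartzMap.seminorm ℂ 0 0 φ + ∑' n, u n) ?_ ?_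
    · intro x
      exact (norm_sub_le _ _).trans (add_le_add (SchwartzMap.norm_le_seminorm ℂ φ x) (hgb x))
    · intro n
      simp only [sub_mul]
      rw [integral_sub (hex_mul_integrable _ _) (hex_bdd_mul hgc hgb (Ψ n).integrable), hcoef]
      rw [show ∫ x, φ x * Ψ n x = hexI φ (Ψ n) from rfl, hexI_comm, sub_self]
  rw [Metric.tendsto_atTop]
  intro ε hε
  rw [Metric.tendstoUniformly_iff] at hunif
  obtain ⟨N₀, hN₀⟩ := Filter.eventually_atTop.mp (hunif (ε / 2) (by positivity))
  refine ⟨N₀, fun N hN => ?_⟩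
  rw [Real.dist_eq, sub_zero, abs_of_nonneg (apply_nonneg _ _)]
  refine lt_of_le_of_lt (b := ε / 2) ?_ (by linarith)
  refine SchwartzMap.seminorm_le_bound' ℂ 0 0 _ (by positivity) fun x => ?_
  have h1 := hN₀ N hN x
  have h2 : g x = φ x := (sub_eq_zero.mp (heq x)).symm
  have h3 : (hexS Ψ N φ - φ) x = (∑ n ∈ Finset.range N, hexI (Ψ n) φ * Ψ n x) - φ x := by
    simp [hexS, sub_apply, SchwartzMap.sum_apply]
  rw [pow_zero, one_mul, iteratedDeriv_zero, h3]
  rw [dist_comm, dist_eq_norm] at h1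
  rw [← h2]
  exact h1.le

def HexGood (Ψ : ℕ → SchwartzMap ℝ ℂ) (p : SchwartzMap ℝ ℂ → ℝ) : Prop :=
  (∃ (C : ℝ) (k : ℕ), 0 ≤ C ∧ ∀ n : ℕ, p (Ψ n) ≤ C * ((n : ℝ) + 1) ^ k) ∧
  ∀ φ, Tendsto (fun N => p (hexS Ψ N φ - φ)) atTop (nhds 0)

lemma hexR_le (hE : 0 < E) (n : ℕ) : hexR E n ≤ (1 + 2 * E) * ((n : ℝ) + 1) := by
  unfold hexR
  have hn : (0 : ℝ) ≤ n := Nat.cast_nonneg n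
  rw [Real.sqrt_le_left (by positivity)]
  have : 0 ≤ E * n := by positivity
  nlinarith [mul_nonneg hE.le this, mul_nonneg this this, mul_nonneg hn hn, mul_nonneg this hn]

lemma HexB.good_A (H : HexB E Ψ) (p : Seminorm ℂ (SchwartzMap ℝ ℂ)) (hp : HexGood Ψ p) :
    HexGood Ψ (fun f => p (hexA E f)) := by
  have hE := H.pos
  obtain ⟨⟨C, k, hC, h1⟩, h2⟩ := hp
  have hR : ∀ n : ℕ, ‖(hexR E n : ℂ)‖ = hexR E n := by
    intro n; rw [Complex.norm_real]; exact Real.norm_of_nonneg (Real.sqrt_nonneg _)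
  have h1' : ∀ n : ℕ, p (Ψ (n - 1)) ≤ C * ((n : ℝ) + 1) ^ k := by
    intro n
    refine (h1 (n - 1)).trans ?_
    have : ((n - 1 : ℕ) : ℝ) ≤ n := by exact_mod_cast Nat.sub_le n 1
    gcongr
  refine ⟨⟨(1 + 2 * E) * C, k + 1, by positivity, fun n => ?_⟩, fun φ => ?_⟩
  · simp only [H.ann, map_smul_eq_mul, hR]
    calc _ ≤ ((1 + 2 * E) * ((n : ℝ) + 1)) * (C * ((n : ℝ) + 1) ^ k) :=
          mul_le_mul (hexR_le hE n) (h1' n) (apply_nonneg _ _) (by positivity)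
      _ = _ := by ring
  · obtain ⟨C', hC', hd⟩ := H.decay (k + 3) φ
    have hlim : Tendsto (fun N : ℕ => p (hexS Ψ N (hexA E φ) - hexA E φ) +
        ((1 + 2 * E) * C * C') * (1 / ((N : ℝ) + 1))) atTop (nhds 0) := by
      have := (h2 (hexA E φ)).add
        ((tendsto_one_div_add_atTop_nhds_zero_nat (𝕜 := ℝ)).const_mul ((1 + 2 * E) * C * C'))
      simpa using this
    refine squeeze_zero (fun N => apply_nonneg _ _) (fun N => ?_) hlim
    have e : hexA E (hexS Ψ N φ - φ) = (hexS Ψ N (hexA E φ) - hexA E φ) -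
        ((hexR E N : ℂ) * hexI (Ψ N) φ) • Ψ (N - 1) := by
      rw [← H.comm_A, map_sub]; abel
    beta_reduce
    rw [e]
    refine (map_sub_le_add p _ _).trans ?_
    gcongr
    rw [map_smul_eq_mul, norm_mul, hR]
    have hp : (0 : ℝ) < (N : ℝ) + 1 := by positivity
    have h3 : ‖hexI (Ψ N) φ‖ ≤ C' / ((N : ℝ) + 1) ^ (k + 2) := by
      rw [le_div_iff₀ (by positivity)]
      refine le_of_mul_le_mul_right ?_ hp
      calc _ = _ := by ring
        _ ≤ _ := hd N
    calc _ ≤ ((1 + 2 * E) * ((N : ℝ) + 1)) * (C' / ((N : ℝ) + 1) ^ (k + 2)) *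
            (C * ((N : ℝ) + 1) ^ k) := by
          refine mul_le_mul (mul_le_mul (hexR_le hE N) h3 (norm_nonneg _) (by positivity))
            (h1' N) (apply_nonneg _ _) (by positivity)
      _ = _ := by field_simp; ring

lemma HexB.good_B (H : HexB E Ψ) (p : Seminorm ℂ (SchwartzMap ℝ ℂ)) (hp : HexGood Ψ p) :
    HexGood Ψ (fun f => p (hexB E f)) := by
  have hE := H.pos
  obtain ⟨⟨C, k, hC, h1⟩, h2⟩ := hp
  have hR : ∀ n : ℕ, ‖(hexR E n : ℂ)‖ = hexR E n := by
    intro n; rw [Complex.norm_real]; exact Real.norm_of_nonneg (Real.sqrt_nonneg _)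
  refine ⟨⟨(1 + 2 * E) * 2 * (C * 2 ^ k), k + 1, by positivity, fun n => ?_⟩, fun φ => ?_⟩
  · simp only [H.cre, map_smul_eq_mul, hR]
    have a1 : hexR E (n + 1) ≤ (1 + 2 * E) * (2 * ((n : ℝ) + 1)) := by
      refine (hexR_le hE (n + 1)).trans ?_
      push_cast
      have hn : (0 : ℝ) ≤ n := Nat.cast_nonneg n
      gcongr; linarith
    have a2 : p (Ψ (n + 1)) ≤ C * (2 * ((n : ℝ) + 1)) ^ k := by
      refine (h1 (n + 1)).trans ?_
      push_cast
      have hn : (0 : ℝ) ≤ n := Nat.cast_nonneg n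
      gcongr; linarith
    calc _ ≤ ((1 + 2 * E) * (2 * ((n : ℝ) + 1))) * (C * (2 * ((n : ℝ) + 1)) ^ k) :=
          mul_le_mul a1 a2 (apply_nonneg _ _) (by positivity)
      _ = _ := by rw [mul_pow]; ring
  · have := (h2 (hexB E φ)).comp (tendsto_add_atTop_nat 1)
    refine this.congr fun N => ?_
    simp only [Function.comp, ← H.comm_B, map_sub]

lemma HexB.good_of_le (p q : SchwartzMap ℝ ℂ → ℝ) (r : SchwartzMap ℝ ℂ → ℝ) (c : ℝ) (hc : 0 ≤ c)
    (hp : HexGood Ψ p) (hq : HexGood Ψ q) (hr0 : ∀ f, 0 ≤ r f)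
    (hr : ∀ f, r f ≤ c * (p f + q f)) : HexGood Ψ r := by
  obtain ⟨⟨C, k, hC, h1⟩, h2⟩ := hp
  obtain ⟨⟨C', k', hC', h1'⟩, h2'⟩ := hq
  refine ⟨⟨c * (C + C'), k + k', by positivity, fun n => (hr _).trans ?_⟩, fun φ => ?_⟩
  · have hn : (1 : ℝ) ≤ (n : ℝ) + 1 := by
      have : (0 : ℝ) ≤ n := Nat.cast_nonneg n
      linarith
    have a1 : ((n : ℝ) + 1) ^ k ≤ ((n : ℝ) + 1) ^ (k + k') := pow_le_pow_right₀ hn (by omega)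
    have a2 : ((n : ℝ) + 1) ^ k' ≤ ((n : ℝ) + 1) ^ (k + k') := pow_le_pow_right₀ hn (by omega)
    rw [mul_assoc, add_mul]
    gcongr
    · exact (h1 n).trans (by gcongr)
    · exact (h1' n).trans (by gcongr)
  · have := ((h2 φ).add (h2' φ)).const_mul c
    rw [add_zero, mul_zero] at this
    exact squeeze_zero (fun N => hr0 _) (fun N => hr _) this

lemma HexB.good_D (H : HexB E Ψ) (p : Seminorm ℂ (SchwartzMap ℝ ℂ)) (hp : HexGood Ψ p) :
    HexGood Ψ (fun f => p (hexD f)) := by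
  refine HexB.good_of_le _ _ _ 1 (by norm_num) (H.good_A p hp) (H.good_B p hp)
    (fun f => apply_nonneg _ _) fun f => ?_
  have e : hexD f = (1 / 2 : ℂ) • (hexA E f - hexB E f) := by
    ext x
    simp only [smul_apply, sub_apply, hexA_apply, hexB_apply, hexD_apply, smul_eq_mul]; ring
  rw [e, map_smul_eq_mul]
  have := map_sub_le_add p (hexA E f) (hexB E f)
  have h0 : 0 ≤ p (hexA E f - hexB E f) := apply_nonneg _ _
  have : ‖(1 / 2 : ℂ)‖ = 1 / 2 := by norm_num
  rw [this]; linarith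

lemma HexB.good_X (H : HexB E Ψ) (p : Seminorm ℂ (SchwartzMap ℝ ℂ)) (hp : HexGood Ψ p) :
    HexGood Ψ (fun f => p (hexX f)) := by
  have hE := H.pos
  refine HexB.good_of_le _ _ _ (2 * E)⁻¹ (by positivity) (H.good_A p hp) (H.good_B p hp)
    (fun f => apply_nonneg _ _) fun f => ?_
  have e : hexX f = (((2 * E)⁻¹ : ℝ) : ℂ) • (hexA E f + hexB E f) := by
    ext x
    simp only [smul_apply, add_apply, hexA_apply, hexB_apply, hexX_apply, smul_eq_mul]
    have : (E : ℂ) ≠ 0 := by exact_mod_cast hE.ne'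
    push_cast
    field_simp
    ring
  rw [e, map_smul_eq_mul, Complex.norm_real, Real.norm_of_nonneg (by positivity)]
  gcongr
  exact map_add_le_add p _ _

lemma HexB.good_seminorm (H : HexB E Ψ) (k m : ℕ) : HexGood Ψ (SchwartzMap.seminorm ℂ k m) := by
  have hz : HexGood Ψ (fun _ => 0) := ⟨⟨0, 0, le_rfl, by simp⟩, by simp⟩
  induction m with
  | zero =>
    induction k with
    | zero =>
      obtain ⟨K, hK, hs⟩ := H.sup
      refine ⟨⟨K, 1, hK.le, fun n => ?_⟩, H.base⟩
      refine SchwartzMap.seminorm_le_bound' ℂ 0 0 _ (by positivity) fun x => ?_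
      simpa using hs n x
    | succ k ih =>
      refine HexB.good_of_le _ _ _ 1 (by norm_num) (H.good_X _ ih) hz
        (fun f => apply_nonneg _ _) fun f => ?_
      rw [one_mul, add_zero]
      refine SchwartzMap.seminorm_le_bound' ℂ _ _ _ (apply_nonneg _ _) fun x => ?_
      have := SchwartzMap.le_seminorm' ℂ k 0 (hexX f) x
      rw [iteratedDeriv_zero] at this ⊢
      rw [hexX_apply, norm_mul, Complex.norm_real, Real.norm_eq_abs] at this
      calc _ = _ := by ring
        _ ≤ _ := this
  | succ m ih =>
    refine HexB.good_of_le _ _ _ 1 (by norm_num) (H.good_D _ ih) hz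
      (fun f => apply_nonneg _ _) fun f => ?_
    rw [one_mul, add_zero]
    refine SchwartzMap.seminorm_le_bound' ℂ _ _ _ (apply_nonneg _ _) fun x => ?_
    have := SchwartzMap.le_seminorm' ℂ k m (hexD f) x
    have e : ⇑(hexD f) = deriv f := funext (hexD_apply f)
    rwa [e, ← iteratedDeriv_succ'] at this

lemma HexB.tendsto (H : HexB E Ψ) (φ : SchwartzMap ℝ ℂ) :
    Tendsto (fun N => hexS Ψ N φ) atTop (nhds φ) := by
  rw [(schwartz_withSeminorms ℂ ℝ ℂ).tendsto_nhds]
  intro i ε hε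
  have := (H.good_seminorm i.1 i.2).2 φ
  exact this.eventually (gt_mem_nhds hε)

end

/-- Parseval-type expansion for tempered distributions: for every
continuous linear functional `F` on Schwartz space and every Schwartz `φ`,
the series `Σ_n F(ψ_n)·(∫ ψ_n φ)` converges to `F(φ)`.  (Here `Ψ n` is the
Hermite function `ψ_n` realized as a Schwartz map.) -/
theorem tempered_distribution_hermite_expansion (E' : ℝ) (hE' : 0 < E')
    (F : SchwartzMap ℝ ℂ →L[ℂ] ℂ)
    (Ψ : ℕ → SchwartzMap ℝ ℂ)
    (hΨ : ∀ (n : ℕ) (q : ℝ), Ψ n q = ((hermiteFn E' n q : ℝ) : ℂ))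
    (φ : SchwartzMap ℝ ℂ) :
    Filter.Tendsto
      (fun N : ℕ => ∑ n ∈ Finset.range N,
        F (Ψ n) * ∫ q : ℝ, ((hermiteFn E' n q : ℝ) : ℂ) * φ q)
      Filter.atTop (nhds (F φ)) := by
  have H := hex_mk E' hE' Ψ hΨ
  have h := (F.continuous.tendsto φ).comp (H.tendsto φ)
  refine h.congr fun N => ?_
  simp only [Function.comp, hexS, map_sum, map_smul, smul_eq_mul, hexI, hΨ]
  exact Finset.sum_congr rfl fun n _ => mul_comm _ _
end

section
/- Let α ≥ ½, θ > 0, and let ψ, φ ∈ S^α_α(ℝ). Then the Wigner distribution W(t,x) := (1/2π) ∫_ℝ e^{ikx} ψ(t − θk/2) conj(φ(t + θk/2)) dk is given by an absolutely convergent integral for every (t,x) ∈ ℝ², and W belongs to the Gel'fand–Shilov space S^α_α(ℝ²). -/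
open MeasureTheory Filter Complex

/-- Membership in the Gel'fand–Shilov space `S^α_α(ℝ)`. -/
def GelfandShilov (α : ℝ) (φ : ℝ → ℂ) : Prop :=
  ContDiff ℝ (⊤ : ℕ∞) φ ∧ ∃ C > (0 : ℝ), ∃ M > (0 : ℝ), ∀ n m : ℕ, ∀ x : ℝ,
    ‖((x : ℂ)) ^ m * iteratedDeriv n φ x‖
      ≤ C * M ^ (n + m) * (n : ℝ) ^ (α * (n : ℝ)) * (m : ℝ) ^ (α * (m : ℝ))

/-- Partial-derivative operator in the first variable. -/
noncomputable def ptOp (f : ℝ × ℝ → ℂ) : ℝ × ℝ → ℂ :=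
  fun p => deriv (fun a => f (a, p.2)) p.1

/-- Partial-derivative operator in the second variable. -/
noncomputable def pxOp (f : ℝ × ℝ → ℂ) : ℝ × ℝ → ℂ :=
  fun p => deriv (fun b => f (p.1, b)) p.2

/-- Membership in the Gel'fand–Shilov space `S^α_α(ℝ²)`. -/
def GelfandShilov2 (α : ℝ) (f : ℝ × ℝ → ℂ) : Prop :=
  ContDiff ℝ (⊤ : ℕ∞) f ∧ ∃ C > (0 : ℝ), ∃ M > (0 : ℝ), ∀ n₁ n₂ m₁ m₂ : ℕ, ∀ p : ℝ × ℝ,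
    ‖((p.1 : ℂ)) ^ m₁ * ((p.2 : ℂ)) ^ m₂ * (ptOp^[n₁] (pxOp^[n₂] f)) p‖
      ≤ C * M ^ (n₁ + n₂ + m₁ + m₂) * (n₁ : ℝ) ^ (α * (n₁ : ℝ)) *
          (n₂ : ℝ) ^ (α * (n₂ : ℝ)) * (m₁ : ℝ) ^ (α * (m₁ : ℝ)) *
          (m₂ : ℝ) ^ (α * (m₂ : ℝ))

open SchwartzMap TensorProduct

namespace WigGS

/-- factorial weight -/
noncomputable def w (α : ℝ) (n : ℕ) : ℝ := (n.factorial : ℝ) ^ α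

lemma w_pos (α : ℝ) (n : ℕ) : 0 < w α n := Real.rpow_pos_of_pos (by positivity) _

lemma w_nonneg (α : ℝ) (n : ℕ) : 0 ≤ w α n := (w_pos α n).le

lemma w_mul_le {α : ℝ} (hα : 0 ≤ α) (i j : ℕ) : w α i * w α j ≤ w α (i + j) := by
  unfold w
  rw [← Real.mul_rpow (by positivity) (by positivity)]
  apply Real.rpow_le_rpow (by positivity) _ hα
  exact_mod_cast Nat.le_of_dvd (Nat.factorial_pos _) (Nat.factorial_mul_factorial_dvd_factorial_add i j)

lemma w_add_le {α : ℝ} (hα : 0 ≤ α) (i j : ℕ) :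
    w α (i + j) ≤ ((2 : ℝ) ^ α) ^ (i + j) * (w α i * w α j) := by
  unfold w
  rw [← Real.mul_rpow (by positivity) (by positivity), ← Real.rpow_natCast, ← Real.rpow_mul (by norm_num),
    mul_comm α, Real.rpow_mul (by norm_num), ← Real.mul_rpow (by positivity) (by positivity)]
  apply Real.rpow_le_rpow (by positivity) _ hα
  rw [Real.rpow_natCast]
  have h := Nat.add_choose_mul_factorial_mul_factorial i j
  have h2 : (i + j).choose j ≤ 2 ^ (i + j) := Nat.choose_le_two_pow _ _
  have : (i + j).factorial ≤ 2 ^ (i + j) * (i.factorial * j.factorial) := by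
    rw [← h, mul_assoc]
    exact Nat.mul_le_mul_right _ h2
  exact_mod_cast this

lemma fact_le_w {α : ℝ} (hα : 1 / 2 ≤ α) (j : ℕ) : (j.factorial : ℝ) ≤ w α j * w α j := by
  unfold w
  rw [← Real.rpow_add (by positivity)]
  calc (j.factorial : ℝ) = (j.factorial : ℝ) ^ (1 : ℝ) := by simp
    _ ≤ _ := Real.rpow_le_rpow_of_exponent_le (by exact_mod_cast Nat.one_le_iff_ne_zero.2 (Nat.factorial_ne_zero _)) (by linarith)

lemma w_le_pow {α : ℝ} (hα : 0 ≤ α) (n : ℕ) : w α n ≤ (n : ℝ) ^ (α * (n : ℝ)) := by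
  unfold w
  rw [mul_comm α, Real.rpow_mul (by positivity), Real.rpow_natCast]
  apply Real.rpow_le_rpow (by positivity) _ hα
  exact_mod_cast Nat.factorial_le_pow n

lemma pow_le_w {α : ℝ} (hα : 0 ≤ α) (n : ℕ) :
    (n : ℝ) ^ (α * (n : ℝ)) ≤ (Real.exp α) ^ n * w α n := by
  unfold w
  rw [mul_comm α, Real.rpow_mul (by positivity), Real.rpow_natCast]
  have h := Real.pow_div_factorial_le_exp (x := n) (by positivity) n
  rw [div_le_iff₀ (by positivity)] at h
  calc ((n : ℝ) ^ n) ^ α ≤ (Real.exp n * n.factorial) ^ α :=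
        Real.rpow_le_rpow (by positivity) h hα
    _ = _ := by
      rw [Real.mul_rpow (by positivity) (by positivity), ← Real.exp_mul, ← Real.exp_nat_mul]

lemma iteratedDeriv_ofReal_pow (d j : ℕ) :
    iteratedDeriv j (fun x : ℝ => (x : ℂ) ^ d)
      = fun x : ℝ => (d.descFactorial j : ℂ) * (x : ℂ) ^ (d - j) := by
  induction j with
  | zero => simp
  | succ j ih =>
    rw [iteratedDeriv_succ, ih]
    funext x
    have h : HasDerivAt (fun x : ℝ => (x : ℂ) ^ (d - j)) (((d - j : ℕ) : ℂ) * (x : ℂ) ^ (d - j - 1)) x := by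
      simpa using (hasDerivAt_pow (d - j) (x : ℂ)).comp_ofReal
    rw [(h.const_mul (d.descFactorial j : ℂ)).deriv, Nat.descFactorial_succ, Nat.sub_sub]
    push_cast
    ring

/-- The bounds in terms of factorial weights. -/
def GB (α : ℝ) (f : ℝ → ℂ) (C M : ℝ) : Prop :=
  ∀ n m : ℕ, ∀ x : ℝ, ‖(x : ℂ) ^ m * iteratedDeriv n f x‖ ≤ C * M ^ (n + m) * (w α n * w α m)

lemma exists_GB {α : ℝ} (hα : 0 ≤ α) {f : ℝ → ℂ} (hf : GelfandShilov α f) :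
    ∃ C M : ℝ, 0 < C ∧ 1 ≤ M ∧ GB α f C M := by
  obtain ⟨-, C, hC, M, hM, h⟩ := hf
  refine ⟨C, max 1 (M * Real.exp α), hC, le_max_left _ _, fun n m x => (h n m x).trans ?_⟩
  calc C * M ^ (n + m) * (n : ℝ) ^ (α * (n : ℝ)) * (m : ℝ) ^ (α * (m : ℝ))
      ≤ C * M ^ (n + m) * ((Real.exp α) ^ n * w α n) * ((Real.exp α) ^ m * w α m) := by
        have := w_nonneg α n
        gcongr
        · exact pow_le_w hα n
        · exact pow_le_w hα m
    _ = C * (M * Real.exp α) ^ (n + m) * (w α n * w α m) := by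
        rw [mul_pow, pow_add (Real.exp α)]; ring
    _ ≤ _ := by
        have := w_nonneg α n
        have := w_nonneg α m
        gcongr
        exact le_max_right _ _

/-- word bound -/
lemma GB.word {α : ℝ} (hα : 1 / 2 ≤ α) {f : ℝ → ℂ} (hs : ContDiff ℝ (⊤ : ℕ∞) f) {C M : ℝ} (hC : 0 < C)
    (hM : 1 ≤ M) (h : GB α f C M) (p e d : ℕ) (x : ℝ) :
    ‖(x : ℂ) ^ p * iteratedDeriv e (fun x : ℝ => (x : ℂ) ^ d * f x) x‖
      ≤ C * (4 * 2 ^ α * M) ^ (p + e + d) * (w α p * w α e * w α d) := by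
  have hα0 : 0 ≤ α := by linarith
  have hA : (1 : ℝ) ≤ 2 ^ α := Real.one_le_rpow (by norm_num) hα0
  have hpow : ContDiff ℝ (⊤ : ℕ∞) (fun x : ℝ => (x : ℂ) ^ d) := (Complex.ofRealCLM.contDiff).pow d
  have key := iteratedDeriv_mul (n := e) (x := x) (f := fun x : ℝ => (x : ℂ) ^ d) (g := f)
    ((hpow.of_le (by exact_mod_cast le_top)).contDiffAt)
    ((hs.of_le (by exact_mod_cast le_top)).contDiffAt)
  have key' : iteratedDeriv e (fun x : ℝ => (x : ℂ) ^ d * f x) x = _ := key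
  rw [key', Finset.mul_sum]
  have hterm : ∀ i ∈ Finset.range (e + 1),
      ‖(x : ℂ) ^ p * ((e.choose i : ℂ) * iteratedDeriv i (fun x : ℝ => (x : ℂ) ^ d) x
        * iteratedDeriv (e - i) f x)‖
      ≤ (e.choose i : ℝ) * (C * (2 ^ d * (2 ^ α) ^ (p + d) * M ^ (p + e + d)) *
          (w α p * w α e * w α d)) := by
    intro i hi
    have hie : i ≤ e := by simpa [Nat.lt_succ_iff] using hi
    rw [iteratedDeriv_ofReal_pow]
    have hw1 := w_nonneg α p
    have hw2 := w_nonneg α e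
    have hw3 := w_nonneg α d
    rcases lt_or_ge d i with hdi | hdi
    · rw [Nat.descFactorial_of_lt hdi]
      simp only [Nat.cast_zero, zero_mul, mul_zero, norm_zero]
      positivity
    · have e1 : (x : ℂ) ^ p * ((e.choose i : ℂ) * ((d.descFactorial i : ℂ) * (x : ℂ) ^ (d - i))
        * iteratedDeriv (e - i) f x) = (e.choose i : ℂ) * ((d.descFactorial i : ℂ) *
          ((x : ℂ) ^ (p + (d - i)) * iteratedDeriv (e - i) f x)) := by
        rw [pow_add]; ring
      rw [e1, norm_mul, norm_mul, Complex.norm_natCast, Complex.norm_natCast]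
      refine mul_le_mul_of_nonneg_left ?_ (Nat.cast_nonneg _)
      have hd : (d.descFactorial i : ℝ) ≤ 2 ^ d * (w α i * w α i) := by
        rw [Nat.descFactorial_eq_factorial_mul_choose, mul_comm]
        push_cast
        gcongr
        · exact_mod_cast Nat.choose_le_two_pow _ _
        · exact fact_le_w hα i
      have hb := h (e - i) (p + (d - i)) x
      have hwi := w_nonneg α i
      have hwei := w_nonneg α (e - i)
      have hwpd := w_nonneg α (p + (d - i))
      have a1 : w α i * w α (e - i) ≤ w α e := by
        have := w_mul_le hα0 i (e - i)
        rwa [Nat.add_sub_cancel' hie] at this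
      have a2 : w α i * w α (p + (d - i)) ≤ (2 ^ α) ^ (p + d) * (w α p * w α d) := by
        have := w_mul_le hα0 i (p + (d - i))
        rw [show i + (p + (d - i)) = p + d by omega] at this
        exact this.trans (w_add_le hα0 p d)
      calc (d.descFactorial i : ℝ) * ‖(x : ℂ) ^ (p + (d - i)) * iteratedDeriv (e - i) f x‖
          ≤ (2 ^ d * (w α i * w α i)) * (C * M ^ (e - i + (p + (d - i))) *
              (w α (e - i) * w α (p + (d - i)))) := by gcongr
        _ = C * 2 ^ d * M ^ (e - i + (p + (d - i))) * ((w α i * w α (e - i)) *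
              (w α i * w α (p + (d - i)))) := by ring
        _ ≤ C * 2 ^ d * M ^ (p + e + d) * (w α e * ((2 ^ α) ^ (p + d) * (w α p * w α d))) := by
            have hMM : M ^ (e - i + (p + (d - i))) ≤ M ^ (p + e + d) :=
              pow_le_pow_right₀ hM (by omega)
            gcongr
        _ = _ := by ring
  refine (norm_sum_le _ _).trans ((Finset.sum_le_sum hterm).trans ?_)
  rw [← Finset.sum_mul]
  have hs2 : ∑ i ∈ Finset.range (e + 1), (e.choose i : ℝ) = 2 ^ e := by
    exact_mod_cast Nat.sum_range_choose e
  rw [hs2]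
  have hw1 := w_nonneg α p
  have hw2 := w_nonneg α e
  have hw3 := w_nonneg α d
  calc (2 : ℝ) ^ e * (C * (2 ^ d * (2 ^ α) ^ (p + d) * M ^ (p + e + d)) *
          (w α p * w α e * w α d))
      = C * (2 ^ (e + d) * (2 ^ α) ^ (p + d) * M ^ (p + e + d)) *
          (w α p * w α e * w α d) := by rw [pow_add]; ring
    _ ≤ C * (4 ^ (p + e + d) * (2 ^ α) ^ (p + e + d) * M ^ (p + e + d)) *
          (w α p * w α e * w α d) := by
        have : (2 : ℝ) ^ (e + d) ≤ 4 ^ (p + e + d) :=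
          (pow_le_pow_left₀ (by norm_num) (by norm_num) _).trans
            (pow_le_pow_right₀ (by norm_num : (1 : ℝ) ≤ 4) (by omega))
        have hAA : ((2 : ℝ) ^ α) ^ (p + d) ≤ (2 ^ α) ^ (p + e + d) :=
          pow_le_pow_right₀ hA (by omega)
        gcongr
    _ = _ := by rw [mul_pow, mul_pow]


/-- Schwartz function from Gelfand-Shilov -/
noncomputable def toS {α : ℝ} {f : ℝ → ℂ} (hf : GelfandShilov α f) : 𝓢(ℝ, ℂ) where
  toFun := f
  smooth' := hf.1
  decay' := by
    intro k n
    obtain ⟨-, C, hC, M, hM, h⟩ := hf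
    refine ⟨C * M ^ (n + k) * (n : ℝ) ^ (α * (n : ℝ)) * (k : ℝ) ^ (α * (k : ℝ)), fun x => ?_⟩
    have := h n k x
    rw [norm_mul, norm_pow, Complex.norm_real] at this
    rw [norm_iteratedFDeriv_eq_norm_iteratedDeriv]
    exact this

lemma toS_coe {α : ℝ} {f : ℝ → ℂ} (hf : GelfandShilov α f) : ⇑(toS hf) = f := rfl

lemma GelfandShilov_conj {α : ℝ} {f : ℝ → ℂ} (hf : GelfandShilov α f) :
    GelfandShilov α (fun x => (starRingEnd ℂ) (f x)) := by
  obtain ⟨hs, C, hC, M, hM, h⟩ := hf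
  refine ⟨Complex.conjCLE.contDiff.comp hs, C, hC, M, hM, fun n m x => ?_⟩
  have : ‖iteratedDeriv n (fun x => (starRingEnd ℂ) (f x)) x‖ = ‖iteratedDeriv n f x‖ := by
    rw [← norm_iteratedFDeriv_eq_norm_iteratedDeriv, ← norm_iteratedFDeriv_eq_norm_iteratedDeriv]
    exact Complex.conjLIE.norm_iteratedFDeriv_comp_left f x n
  rw [norm_mul, this, ← norm_mul]
  exact h n m x

/-- multiplication by x -/
noncomputable def X : Module.End ℂ 𝓢(ℝ, ℂ) :=
  (SchwartzMap.smulLeftCLM ℂ (fun x : ℝ => (x : ℂ))).toLinearMap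

/-- derivative -/
noncomputable def D : Module.End ℂ 𝓢(ℝ, ℂ) := (SchwartzMap.derivCLM ℂ ℂ).toLinearMap

lemma X_apply (f : 𝓢(ℝ, ℂ)) (x : ℝ) : X f x = (x : ℂ) * f x := by
  have h : Function.HasTemperateGrowth (fun x : ℝ => (x : ℂ)) := Function.Complex.hasTemperateGrowth_ofReal
  simp [X, h]

lemma D_apply (f : 𝓢(ℝ, ℂ)) (x : ℝ) : D f x = deriv f x := rfl

lemma X_pow_apply (d : ℕ) (f : 𝓢(ℝ, ℂ)) (x : ℝ) : (X ^ d) f x = (x : ℂ) ^ d * f x := by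
  induction d with
  | zero => simp
  | succ d ih => rw [pow_succ', Module.End.mul_apply, X_apply, ih]; ring

lemma D_pow_coe (e : ℕ) (f : 𝓢(ℝ, ℂ)) : ⇑((D ^ e) f) = iteratedDeriv e f := by
  induction e with
  | zero => simp
  | succ d ih =>
    rw [pow_succ', Module.End.mul_apply, iteratedDeriv_succ, ← ih]
    rfl

/-- Decay bound -/
def DB (f : 𝓢(ℝ, ℂ)) (B : ℝ) : Prop := 0 ≤ B ∧ ∀ x : ℝ, ‖f x‖ * (1 + x ^ 2) ≤ B

lemma exists_DB (f : 𝓢(ℝ, ℂ)) : ∃ B, DB f B := by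
  obtain ⟨C0, h0, h0'⟩ := f.decay 0 0
  obtain ⟨C2, h2, h2'⟩ := f.decay 2 0
  refine ⟨C0 + C2, by positivity, fun x => ?_⟩
  have a := h0' x
  have b := h2' x
  simp only [norm_iteratedFDeriv_zero, pow_zero, one_mul, Real.norm_eq_abs, sq_abs] at a b
  linarith

lemma DB.le {f g : 𝓢(ℝ, ℂ)} {A B : ℝ} (hf : DB f A) (hg : DB g B) (u v : ℝ) :
    ‖f u‖ * ‖g v‖ ≤ A * B * (1 + (u - v) ^ 2 / 2)⁻¹ := by
  rw [← div_eq_mul_inv, le_div_iff₀ (by positivity)]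
  have h1 : (1 + (u - v) ^ 2 / 2) ≤ (1 + u ^ 2) * (1 + v ^ 2) := by
    nlinarith [sq_nonneg (u + v), sq_nonneg (u * v)]
  calc ‖f u‖ * ‖g v‖ * (1 + (u - v) ^ 2 / 2) ≤ ‖f u‖ * ‖g v‖ * ((1 + u ^ 2) * (1 + v ^ 2)) := by gcongr
    _ = (‖f u‖ * (1 + u ^ 2)) * (‖g v‖ * (1 + v ^ 2)) := by ring
    _ ≤ A * B := mul_le_mul (hf.2 u) (hg.2 v) (by positivity) hf.1

/-- word decay bound -/
lemma word_DB {α : ℝ} (hα : 1 / 2 ≤ α) {f : ℝ → ℂ} (hf : GelfandShilov α f) :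
    ∃ C M : ℝ, 0 < C ∧ 1 ≤ M ∧ ∀ a b c d : ℕ,
      DB ((X ^ a) ((D ^ b) ((D ^ c) ((X ^ d) (toS hf)))))
        (C * M ^ (a + b + c + d) * (w α a * w α b * w α c * w α d)) := by
  have hα0 : 0 ≤ α := by linarith
  obtain ⟨C, M, hC, hM, h⟩ := exists_GB hα0 hf
  have hA : (1 : ℝ) ≤ 2 ^ α := Real.one_le_rpow (by norm_num) hα0
  set A : ℝ := 2 ^ α with hAdef
  set L : ℝ := 4 * A * M with hL
  have hL1 : 1 ≤ L := by nlinarith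
  have hw2 := w_pos α 2
  refine ⟨C + C * L ^ 2 * A ^ 2 * w α 2, L * A, by positivity, by nlinarith, fun a b c d => ?_⟩
  have hwa := w_nonneg α a
  have hwb := w_nonneg α b
  have hwc := w_nonneg α c
  have hwd := w_nonneg α d
  refine ⟨by positivity, fun x => ?_⟩
  have hcoe : ⇑((X ^ d) (toS hf)) = fun x : ℝ => (x : ℂ) ^ d * f x := by
    funext y; rw [X_pow_apply]; rfl
  have e1 : ((X ^ a) ((D ^ b) ((D ^ c) ((X ^ d) (toS hf))))) x
      = (x : ℂ) ^ a * iteratedDeriv (b + c) (fun x : ℝ => (x : ℂ) ^ d * f x) x := by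
    rw [X_pow_apply, ← Module.End.mul_apply, ← pow_add, D_pow_coe, hcoe]
  have k0 := h.word hα hf.1 hC hM a (b + c) d x
  have k2 := h.word hα hf.1 hC hM (a + 2) (b + c) d x
  rw [e1]
  have e2 : ‖(x : ℂ) ^ a * iteratedDeriv (b + c) (fun x : ℝ => (x : ℂ) ^ d * f x) x‖ * (1 + x ^ 2)
     = ‖(x : ℂ) ^ a * iteratedDeriv (b + c) (fun x : ℝ => (x : ℂ) ^ d * f x) x‖ +
      ‖(x : ℂ) ^ (a + 2) * iteratedDeriv (b + c) (fun x : ℝ => (x : ℂ) ^ d * f x) x‖ := by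
    simp only [norm_mul, norm_pow, Complex.norm_real, Real.norm_eq_abs, pow_add, sq_abs]
    ring
  rw [e2]
  have hbc := w_add_le hα0 b c
  have ha2 := w_add_le hα0 a 2
  rw [← hAdef] at hbc ha2
  have hwbc := w_nonneg α (b + c)
  have hAA : A ^ (b + c) ≤ A ^ (a + b + c + d) := pow_le_pow_right₀ hA (by omega)
  have hAA' : A ^ (a + 2) * A ^ (b + c) ≤ A ^ 2 * A ^ (a + b + c + d) := by
    rw [← pow_add, ← pow_add]; exact pow_le_pow_right₀ hA (by omega)
  calc _ ≤ C * L ^ (a + (b + c) + d) * (w α a * w α (b + c) * w α d)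
        + C * L ^ (a + 2 + (b + c) + d) * (w α (a + 2) * w α (b + c) * w α d) := add_le_add k0 k2
    _ ≤ C * L ^ (a + (b + c) + d) * (w α a * (A ^ (b + c) * (w α b * w α c)) * w α d)
        + C * L ^ (a + 2 + (b + c) + d) * ((A ^ (a + 2) * (w α a * w α 2)) *
          (A ^ (b + c) * (w α b * w α c)) * w α d) := by gcongr
    _ = C * L ^ (a + b + c + d) * A ^ (b + c) * (w α a * w α b * w α c * w α d)
        + C * L ^ 2 * w α 2 * L ^ (a + b + c + d) * (A ^ (a + 2) * A ^ (b + c)) *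
          (w α a * w α b * w α c * w α d) := by
        rw [show a + (b + c) + d = a + b + c + d by ring,
          show a + 2 + (b + c) + d = a + b + c + d + 2 by ring, pow_add L _ 2]; ring
    _ ≤ C * L ^ (a + b + c + d) * A ^ (a + b + c + d) * (w α a * w α b * w α c * w α d)
        + C * L ^ 2 * w α 2 * L ^ (a + b + c + d) * (A ^ 2 * A ^ (a + b + c + d)) *
          (w α a * w α b * w α c * w α d) := by gcongr
    _ = _ := by rw [mul_pow]; ring


/-- Wigner integrand -/
noncomputable def Wk (θ : ℝ) (f g : 𝓢(ℝ, ℂ)) (p : ℝ × ℝ) (k : ℝ) : ℂ :=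
  Complex.exp (Complex.I * (k : ℂ) * (p.2 : ℂ)) * f (p.1 - θ * k / 2) * g (p.1 + θ * k / 2)

/-- dominating function -/
noncomputable def bd (θ k : ℝ) : ℝ := (1 + (θ * k) ^ 2 / 2)⁻¹

lemma bd_nonneg (θ k : ℝ) : 0 ≤ bd θ k := by unfold bd; positivity

lemma bd_integrable {θ : ℝ} (hθ : 0 < θ) : Integrable (bd θ) := by
  have h := integrable_inv_one_add_sq.comp_mul_left' (R := θ / Real.sqrt 2) (by positivity)
  refine h.congr (Eventually.of_forall fun k => ?_)
  simp only [bd]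
  congr 2
  rw [div_mul_eq_mul_div, div_pow, Real.sq_sqrt (by norm_num)]

lemma Wk_norm_le (θ : ℝ) {f g : 𝓢(ℝ, ℂ)} {A B : ℝ} (hf : DB f A) (hg : DB g B) (p : ℝ × ℝ) (k : ℝ) :
    ‖Wk θ f g p k‖ ≤ A * B * bd θ k := by
  have h := hf.le hg (p.1 - θ * k / 2) (p.1 + θ * k / 2)
  have e : ‖Complex.exp (Complex.I * (k : ℂ) * (p.2 : ℂ))‖ = 1 := by
    rw [show Complex.I * (k : ℂ) * (p.2 : ℂ) = ((k * p.2 : ℝ) : ℂ) * Complex.I by push_cast; ring]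
    exact Complex.norm_exp_ofReal_mul_I _
  unfold Wk bd
  rw [norm_mul, norm_mul, e, one_mul]
  refine h.trans (le_of_eq ?_)
  congr 3
  ring

lemma Wk_continuous (θ : ℝ) (f g : 𝓢(ℝ, ℂ)) (p : ℝ × ℝ) : Continuous (Wk θ f g p) := by
  unfold Wk
  have := f.continuous
  have := g.continuous
  fun_prop

lemma Wk_integrable {θ : ℝ} (hθ : 0 < θ) (f g : 𝓢(ℝ, ℂ)) (p : ℝ × ℝ) :
    Integrable (Wk θ f g p) := by
  obtain ⟨A, hA⟩ := exists_DB f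
  obtain ⟨B, hB⟩ := exists_DB g
  exact ((bd_integrable hθ).const_mul (A * B)).mono' (Wk_continuous θ f g p).aestronglyMeasurable
    (Eventually.of_forall fun k => Wk_norm_le θ hA hB p k)

/-- bilinear Wigner transform -/
noncomputable def WB {θ : ℝ} (hθ : 0 < θ) : 𝓢(ℝ, ℂ) →ₗ[ℂ] 𝓢(ℝ, ℂ) →ₗ[ℂ] (ℝ × ℝ → ℂ) :=
  LinearMap.mk₂ ℂ (fun f g p => ∫ k, Wk θ f g p k)
    (by
      intro f f' g; funext p
      simp only [Pi.add_apply]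
      rw [← integral_add (Wk_integrable hθ _ _ p) (Wk_integrable hθ _ _ p)]
      congr 1; funext k; simp [Wk]; ring)
    (by
      intro c f g; funext p
      simp only [Pi.smul_apply]
      rw [← integral_smul]
      congr 1; funext k; simp [Wk]; ring)
    (by
      intro f f' g; funext p
      simp only [Pi.add_apply]
      rw [← integral_add (Wk_integrable hθ _ _ p) (Wk_integrable hθ _ _ p)]
      congr 1; funext k; simp [Wk]; ring)
    (by
      intro c f g; funext p
      simp only [Pi.smul_apply]
      rw [← integral_smul]
      congr 1; funext k; simp [Wk]; ring)

lemma WB_apply {θ : ℝ} (hθ : 0 < θ) (f g : 𝓢(ℝ, ℂ)) (p : ℝ × ℝ) :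
    WB hθ f g p = ∫ k, Wk θ f g p k := rfl

lemma WB_norm_le {θ : ℝ} (hθ : 0 < θ) {f g : 𝓢(ℝ, ℂ)} {A B : ℝ} (hf : DB f A) (hg : DB g B)
    (p : ℝ × ℝ) : ‖WB hθ f g p‖ ≤ (∫ k, bd θ k) * (A * B) := by
  rw [WB_apply, mul_comm, ← integral_const_mul]
  exact norm_integral_le_of_norm_le ((bd_integrable hθ).const_mul (A * B))
    (Eventually.of_forall fun k => Wk_norm_le θ hf hg p k)

/-- real-linear coordinate functionals with complex values -/
noncomputable def cfst : ℝ × ℝ →L[ℝ] ℂ := Complex.ofRealCLM.comp (ContinuousLinearMap.fst ℝ ℝ ℝ)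
/-- second coordinate -/
noncomputable def csnd : ℝ × ℝ →L[ℝ] ℂ := Complex.ofRealCLM.comp (ContinuousLinearMap.snd ℝ ℝ ℝ)

lemma Wk_Ik {θ : ℝ} (hθ : 0 < θ) (f g : 𝓢(ℝ, ℂ)) (p : ℝ × ℝ) (k : ℝ) :
    Complex.I * k * Wk θ f g p k
      = (Complex.I / θ) * (Wk θ f (X g) p k - Wk θ (X f) g p k) := by
  have : (θ : ℂ) ≠ 0 := by exact_mod_cast hθ.ne'
  unfold Wk
  rw [X_apply, X_apply]
  push_cast
  field_simp
  ring

lemma Wk_hasFDerivAt {θ : ℝ} (hθ : 0 < θ) (f g : 𝓢(ℝ, ℂ)) (p : ℝ × ℝ) (k : ℝ) :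
    HasFDerivAt (fun p => Wk θ f g p k)
      ((Wk θ (D f) g p k + Wk θ f (D g) p k) • cfst +
        ((Complex.I / θ) * (Wk θ f (X g) p k - Wk θ (X f) g p k)) • csnd) p := by
  rw [← Wk_Ik hθ]
  have h2 : HasFDerivAt (fun p : ℝ × ℝ => (p.2 : ℂ)) csnd p := csnd.hasFDerivAt
  have h1 : HasFDerivAt (fun p : ℝ × ℝ => p.1) (ContinuousLinearMap.fst ℝ ℝ ℝ) p :=
    (ContinuousLinearMap.fst ℝ ℝ ℝ).hasFDerivAt
  have he := (h2.const_mul (Complex.I * (k : ℂ))).cexp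
  have hf := (f.hasDerivAt (p.1 - θ * k / 2)).hasFDerivAt.comp p (h1.sub_const (θ * k / 2))
  have hg := (g.hasDerivAt (p.1 + θ * k / 2)).hasFDerivAt.comp p (h1.add_const (θ * k / 2))
  have := (he.mul hf).mul hg
  refine this.congr_fderiv ?_
  ext <;> simp [Wk, cfst, csnd, D_apply] <;> ring

lemma WB_hasFDerivAt {θ : ℝ} (hθ : 0 < θ) (f g : 𝓢(ℝ, ℂ)) (p : ℝ × ℝ) :
    HasFDerivAt (WB hθ f g)
      ((WB hθ (D f) g p + WB hθ f (D g) p) • cfst +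
        ((Complex.I / θ) * (WB hθ f (X g) p - WB hθ (X f) g p)) • csnd) p := by
  obtain ⟨A, hA⟩ := exists_DB f
  obtain ⟨B, hB⟩ := exists_DB g
  obtain ⟨A1, hA1⟩ := exists_DB (D f)
  obtain ⟨B1, hB1⟩ := exists_DB (D g)
  obtain ⟨A2, hA2⟩ := exists_DB (X f)
  obtain ⟨B2, hB2⟩ := exists_DB (X g)
  have hcont : Continuous (fun k => (Wk θ (D f) g p k + Wk θ f (D g) p k) • cfst +
        ((Complex.I / θ) * (Wk θ f (X g) p k - Wk θ (X f) g p k)) • csnd) := by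
    have := Wk_continuous θ (D f) g p
    have := Wk_continuous θ f (D g) p
    have := Wk_continuous θ f (X g) p
    have := Wk_continuous θ (X f) g p
    fun_prop
  have key := hasFDerivAt_integral_of_dominated_of_fderiv_le (μ := volume) (𝕜 := ℝ)
    (F := fun p k => Wk θ f g p k) (x₀ := p) (s := Set.univ)
    (F' := fun p k => (Wk θ (D f) g p k + Wk θ f (D g) p k) • cfst +
        ((Complex.I / θ) * (Wk θ f (X g) p k - Wk θ (X f) g p k)) • csnd)
    (bound := fun k => (A1 * B * bd θ k + A * B1 * bd θ k) * ‖cfst‖ +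
       (‖Complex.I / θ‖ * (A * B2 * bd θ k + A2 * B * bd θ k)) * ‖csnd‖)
    Filter.univ_mem
    (Eventually.of_forall fun q => (Wk_continuous θ f g q).aestronglyMeasurable)
    (Wk_integrable hθ f g p) hcont.aestronglyMeasurable
    (Eventually.of_forall fun k q _ => by
      refine (norm_add_le _ _).trans ?_
      rw [norm_smul, norm_smul, norm_mul]
      have h1 := Wk_norm_le θ hA1 hB q k
      have h2 := Wk_norm_le θ hA hB1 q k
      have h3 := Wk_norm_le θ hA hB2 q k
      have h4 := Wk_norm_le θ hA2 hB q k
      gcongr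
      · exact (norm_add_le _ _).trans (add_le_add h1 h2)
      · exact (norm_sub_le _ _).trans (add_le_add h3 h4))
    (by
      have hb := bd_integrable hθ
      exact (((hb.const_mul _).add (hb.const_mul _)).mul_const _).add
        ((((hb.const_mul _).add (hb.const_mul _)).const_mul _).mul_const _))
    (Eventually.of_forall fun k q _ => Wk_hasFDerivAt hθ f g q k)
  have i1 := Wk_integrable hθ (D f) g p
  have i2 := Wk_integrable hθ f (D g) p
  have i3 := Wk_integrable hθ f (X g) p
  have i4 := Wk_integrable hθ (X f) g p
  refine key.congr_fderiv ?_
  have s1 : Integrable (fun k => (Wk θ (D f) g p k + Wk θ f (D g) p k) • cfst) :=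
    (i1.add i2).smul_const _
  have s2 : Integrable (fun k => ((Complex.I / θ) * (Wk θ f (X g) p k - Wk θ (X f) g p k)) • csnd) :=
    ((i3.sub i4).const_mul _).smul_const _
  rw [integral_add s1 s2, integral_smul_const, integral_smul_const, integral_add i1 i2,
    integral_const_mul, integral_sub i3 i4]
  rfl

lemma WB_mul_t {θ : ℝ} (hθ : 0 < θ) (f g : 𝓢(ℝ, ℂ)) (p : ℝ × ℝ) :
    (p.1 : ℂ) * WB hθ f g p = (1 / 2 : ℂ) * WB hθ (X f) g p + (1 / 2 : ℂ) * WB hθ f (X g) p := by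
  simp only [WB_apply]
  rw [← integral_const_mul, ← integral_const_mul, ← integral_const_mul,
    ← integral_add ((Wk_integrable hθ _ _ p).const_mul _) ((Wk_integrable hθ _ _ p).const_mul _)]
  congr 1; funext k
  simp only [Wk, X_apply]
  push_cast
  ring

lemma WB_mul_x {θ : ℝ} (hθ : 0 < θ) (f g : 𝓢(ℝ, ℂ)) (p : ℝ × ℝ) :
    (p.2 : ℂ) * WB hθ f g p = (-(Complex.I * θ / 2) : ℂ) * WB hθ (D f) g p
      + (Complex.I * θ / 2 : ℂ) * WB hθ f (D g) p := by
  have hd : ∀ k : ℝ, HasDerivAt (Wk θ f g p)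
      (Complex.I * p.2 * Wk θ f g p k + ((-(θ / 2 : ℂ)) * Wk θ (D f) g p k
        + (θ / 2 : ℂ) * Wk θ f (D g) p k)) k := by
    intro k
    have h0 : HasDerivAt (fun k : ℝ => (k : ℂ)) 1 k := Complex.ofRealCLM.hasDerivAt
    have he := ((h0.const_mul Complex.I).mul_const (p.2 : ℂ)).cexp
    have hl : HasDerivAt (fun k : ℝ => θ * k / 2) (θ / 2) k := by
      simpa using ((hasDerivAt_id k).const_mul θ).div_const 2
    have hf := (f.hasDerivAt (p.1 - θ * k / 2)).scomp k (hl.const_sub p.1)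
    have hg := (g.hasDerivAt (p.1 + θ * k / 2)).scomp k (hl.const_add p.1)
    refine ((he.mul hf).mul hg).congr_deriv ?_
    simp [Wk, D_apply]
    ring
  have i0 := Wk_integrable hθ f g p
  have i1 := Wk_integrable hθ (D f) g p
  have i2 := Wk_integrable hθ f (D g) p
  have j0 := i0.const_mul (Complex.I * p.2)
  have j1 := i1.const_mul (-(θ / 2 : ℂ))
  have j2 := i2.const_mul (θ / 2 : ℂ)
  have key := integral_eq_zero_of_hasDerivAt_of_integrable hd (j0.add (j1.add j2)) i0
  have key2 := integral_add j0 (j1.add j2)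
  have key3 := integral_add j1 j2
  simp only [Pi.add_apply] at key2
  rw [key2, key3, integral_const_mul, integral_const_mul, integral_const_mul] at key
  simp only [WB_apply]
  linear_combination (-Complex.I) * key + ((p.2 : ℂ) * ∫ k, Wk θ f g p k) * Complex.I_sq


/-- tensor square of Schwartz space -/
abbrev T : Type := 𝓢(ℝ, ℂ) ⊗[ℂ] 𝓢(ℝ, ℂ)

/-- Leibniz-type operator on the tensor square -/
noncomputable def op (c₁ : ℂ) (A : Module.End ℂ 𝓢(ℝ, ℂ)) (c₂ : ℂ) (B : Module.End ℂ 𝓢(ℝ, ℂ)) :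
    Module.End ℂ T := c₁ • LinearMap.rTensor 𝓢(ℝ, ℂ) A + c₂ • LinearMap.lTensor 𝓢(ℝ, ℂ) B

lemma op_tmul (c₁ : ℂ) (A : Module.End ℂ 𝓢(ℝ, ℂ)) (c₂ : ℂ) (B : Module.End ℂ 𝓢(ℝ, ℂ))
    (f g : 𝓢(ℝ, ℂ)) : op c₁ A c₂ B (f ⊗ₜ g) = c₁ • (A f ⊗ₜ g) + c₂ • (f ⊗ₜ B g) := by
  simp [op]

lemma op_bound (c₁ : ℂ) (A : Module.End ℂ 𝓢(ℝ, ℂ)) (c₂ : ℂ) (B : Module.End ℂ 𝓢(ℝ, ℂ))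
    (ℓ : T →ₗ[ℂ] ℂ) (K : ℝ) (n : ℕ) : ∀ f g : 𝓢(ℝ, ℂ),
    (∀ i j : ℕ, i + j = n → ‖ℓ ((A ^ i) f ⊗ₜ (B ^ j) g)‖ ≤ K) →
    ‖ℓ (((op c₁ A c₂ B) ^ n) (f ⊗ₜ g))‖ ≤ (‖c₁‖ + ‖c₂‖) ^ n * K := by
  induction n with
  | zero =>
    intro f g h
    simpa using h 0 0 rfl
  | succ n ih =>
    intro f g h
    rw [pow_succ, Module.End.mul_apply, op_tmul, map_add, map_add, map_smul, map_smul, map_smul,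
      map_smul]
    have h1 := ih (A f) g (fun i j hij => by
      have := h (i + 1) j (by omega)
      rwa [pow_succ, Module.End.mul_apply] at this)
    have h2 := ih f (B g) (fun i j hij => by
      have := h i (j + 1) (by omega)
      rwa [pow_succ B, Module.End.mul_apply] at this)
    refine (norm_add_le _ _).trans ?_
    rw [norm_smul, norm_smul]
    calc _ ≤ ‖c₁‖ * ((‖c₁‖ + ‖c₂‖) ^ n * K) + ‖c₂‖ * ((‖c₁‖ + ‖c₂‖) ^ n * K) := by gcongr
      _ = _ := by ring

/-- Wigner map on tensors -/
noncomputable def WT {θ : ℝ} (hθ : 0 < θ) : T →ₗ[ℂ] (ℝ × ℝ → ℂ) := TensorProduct.lift (WB hθ)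

lemma WT_tmul {θ : ℝ} (hθ : 0 < θ) (f g : 𝓢(ℝ, ℂ)) : WT hθ (f ⊗ₜ g) = WB hθ f g := by
  simp [WT]

/-- t-derivative -/
noncomputable def Dt : Module.End ℂ T := op 1 D 1 D
/-- x-derivative -/
noncomputable def Dx (θ : ℝ) : Module.End ℂ T := op (-(Complex.I / θ)) X (Complex.I / θ) X
/-- multiplication by t -/
noncomputable def Mt : Module.End ℂ T := op (1 / 2) X (1 / 2) X
/-- multiplication by x -/
noncomputable def Mx (θ : ℝ) : Module.End ℂ T := op (-(Complex.I * θ / 2)) D (Complex.I * θ / 2) D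

lemma WT_hasFDerivAt {θ : ℝ} (hθ : 0 < θ) (z : T) (p : ℝ × ℝ) :
    HasFDerivAt (WT hθ z) (WT hθ (Dt z) p • cfst + WT hθ (Dx θ z) p • csnd) p := by
  induction z using TensorProduct.induction_on with
  | zero =>
    have h0 : HasFDerivAt (𝕜 := ℝ) (fun _ : ℝ × ℝ => (0 : ℂ)) 0 p := hasFDerivAt_const (0 : ℂ) p
    rw [map_zero]
    refine HasFDerivAt.congr_fderiv h0 ?_
    ext <;> simp
  | tmul f g =>
    refine (WT_tmul hθ f g ▸ WB_hasFDerivAt hθ f g p).congr_fderiv ?_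
    simp only [Dt, Dx, op_tmul, map_add, map_smul, WT_tmul, Pi.add_apply, Pi.smul_apply, smul_eq_mul]
    congr 2 <;> ring
  | add y z hy hz =>
    rw [map_add]
    refine (hy.add hz).congr_fderiv ?_
    ext <;> simp <;> ring

lemma WT_mul_t {θ : ℝ} (hθ : 0 < θ) (z : T) (p : ℝ × ℝ) :
    (p.1 : ℂ) * WT hθ z p = WT hθ (Mt z) p := by
  induction z using TensorProduct.induction_on with
  | zero => simp
  | tmul f g =>
    simp only [Mt, op_tmul, map_add, map_smul, WT_tmul, Pi.add_apply, Pi.smul_apply, smul_eq_mul]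
    exact WB_mul_t hθ f g p
  | add y z hy hz => simp only [map_add, Pi.add_apply, mul_add, hy, hz]

lemma WT_mul_x {θ : ℝ} (hθ : 0 < θ) (z : T) (p : ℝ × ℝ) :
    (p.2 : ℂ) * WT hθ z p = WT hθ (Mx θ z) p := by
  induction z using TensorProduct.induction_on with
  | zero => simp
  | tmul f g =>
    simp only [Mx, op_tmul, map_add, map_smul, WT_tmul, Pi.add_apply, Pi.smul_apply, smul_eq_mul]
    exact WB_mul_x hθ f g p
  | add y z hy hz => simp only [map_add, Pi.add_apply, mul_add, hy, hz]

lemma WT_mul_t_pow {θ : ℝ} (hθ : 0 < θ) (n : ℕ) (z : T) (p : ℝ × ℝ) :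
    (p.1 : ℂ) ^ n * WT hθ z p = WT hθ ((Mt ^ n) z) p := by
  induction n with
  | zero => simp
  | succ n ih => rw [pow_succ' Mt, Module.End.mul_apply, ← WT_mul_t, ← ih]; ring

lemma WT_mul_x_pow {θ : ℝ} (hθ : 0 < θ) (n : ℕ) (z : T) (p : ℝ × ℝ) :
    (p.2 : ℂ) ^ n * WT hθ z p = WT hθ ((Mx θ ^ n) z) p := by
  induction n with
  | zero => simp
  | succ n ih => rw [pow_succ' (Mx θ), Module.End.mul_apply, ← WT_mul_x, ← ih]; ring

lemma WT_pt {θ : ℝ} (hθ : 0 < θ) (z : T) : ptOp (WT hθ z) = WT hθ (Dt z) := by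
  funext p
  have h := (WT_hasFDerivAt hθ z (p.1, p.2)).comp_hasDerivAt p.1
    ((hasDerivAt_id p.1).prodMk (hasDerivAt_const p.1 p.2))
  have h2 := h.deriv
  simp only [cfst, csnd] at h2
  simpa [ptOp, Function.comp_def] using h2

lemma WT_px {θ : ℝ} (hθ : 0 < θ) (z : T) : pxOp (WT hθ z) = WT hθ (Dx θ z) := by
  funext p
  have h := (WT_hasFDerivAt hθ z (p.1, p.2)).comp_hasDerivAt p.2
    ((hasDerivAt_const p.2 p.1).prodMk (hasDerivAt_id p.2))
  have h2 := h.deriv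
  simp only [cfst, csnd] at h2
  simpa [pxOp, Function.comp_def] using h2

lemma WT_pt_iter {θ : ℝ} (hθ : 0 < θ) (n : ℕ) (z : T) :
    ptOp^[n] (WT hθ z) = WT hθ ((Dt ^ n) z) := by
  induction n with
  | zero => simp
  | succ n ih => rw [Function.iterate_succ_apply', ih, WT_pt, pow_succ', Module.End.mul_apply]

lemma WT_px_iter {θ : ℝ} (hθ : 0 < θ) (n : ℕ) (z : T) :
    pxOp^[n] (WT hθ z) = WT hθ ((Dx θ ^ n) z) := by
  induction n with
  | zero => simp
  | succ n ih => rw [Function.iterate_succ_apply', ih, WT_px, pow_succ', Module.End.mul_apply]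

lemma WT_contDiff {θ : ℝ} (hθ : 0 < θ) (z : T) : ContDiff ℝ (⊤ : ℕ∞) (WT hθ z) := by
  rw [contDiff_iff_forall_nat_le]
  intro m _
  induction m generalizing z with
  | zero =>
    have : Differentiable ℝ (WT hθ z) := fun p => (WT_hasFDerivAt hθ z p).differentiableAt
    exact contDiff_zero.2 this.continuous
  | succ m ih =>
    refine contDiff_succ_iff_hasFDerivAt.2 ⟨_, ?_, WT_hasFDerivAt hθ z⟩
    exact ((ih (Dt z) (by exact_mod_cast le_top)).smul contDiff_const).add
      ((ih (Dx θ z) (by exact_mod_cast le_top)).smul contDiff_const)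

lemma main_bound {α θ : ℝ} (hα : 1 / 2 ≤ α) (hθ : 0 < θ) {ψ φ : ℝ → ℂ} (hψ : GelfandShilov α ψ)
    (hφ : GelfandShilov α φ) (c : ℂ) :
    GelfandShilov2 α (WT hθ (c • (toS hψ ⊗ₜ toS hφ))) := by
  have hα0 : 0 ≤ α := by linarith
  refine ⟨WT_contDiff hθ _, ?_⟩
  obtain ⟨C1, M1, hC1, hM1, h1⟩ := word_DB hα hψ
  obtain ⟨C2, M2, hC2, hM2, h2⟩ := word_DB hα hφ
  set I0 : ℝ := ∫ k, bd θ k with hI0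
  have hI : 0 ≤ I0 := integral_nonneg (bd_nonneg θ)
  set r1 : ℝ := ‖(1 / 2 : ℂ)‖ + ‖(1 / 2 : ℂ)‖ with hr1
  set r2 : ℝ := ‖(-(Complex.I * θ / 2) : ℂ)‖ + ‖(Complex.I * θ / 2 : ℂ)‖ with hr2
  set r3 : ℝ := ‖(1 : ℂ)‖ + ‖(1 : ℂ)‖ with hr3
  set r4 : ℝ := ‖(-(Complex.I / θ) : ℂ)‖ + ‖(Complex.I / θ : ℂ)‖ with hr4
  have p1 : 0 ≤ r1 := by positivity
  have p2 : 0 ≤ r2 := by positivity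
  have p3 : 0 ≤ r3 := by positivity
  have p4 : 0 ≤ r4 := by positivity
  set R : ℝ := 1 + r1 + r2 + r3 + r4 with hR
  refine ⟨‖c‖ * I0 * C1 * C2 + 1, by positivity, R * (M1 * M2), by positivity,
    fun n₁ n₂ m₁ m₂ p => ?_⟩
  rw [WT_px_iter, WT_pt_iter, mul_assoc, WT_mul_x_pow, WT_mul_t_pow]
  simp only [map_smul, Pi.smul_apply, norm_smul]
  set K : ℝ := I0 * C1 * C2 * (M1 * M2) ^ (n₁ + n₂ + m₁ + m₂) *
    (w α n₁ * w α n₂ * w α m₁ * w α m₂) with hK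
  let ev : T →ₗ[ℂ] ℂ := (LinearMap.proj p).comp (WT hθ)
  have hmain : ∀ d d' : ℕ, d + d' = n₂ → ∀ e e' : ℕ, e + e' = n₁ → ∀ b b' : ℕ, b + b' = m₂ →
      ∀ a a' : ℕ, a + a' = m₁ →
      ‖ev ((X ^ a) ((D ^ b) ((D ^ e) ((X ^ d) (toS hψ)))) ⊗ₜ
        (X ^ a') ((D ^ b') ((D ^ e') ((X ^ d') (toS hφ)))))‖ ≤ K := by
    intro d d' hd e e' he b b' hb a a' ha
    have hev : ev ((X ^ a) ((D ^ b) ((D ^ e) ((X ^ d) (toS hψ)))) ⊗ₜ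
        (X ^ a') ((D ^ b') ((D ^ e') ((X ^ d') (toS hφ))))) =
        WB hθ ((X ^ a) ((D ^ b) ((D ^ e) ((X ^ d) (toS hψ)))))
        ((X ^ a') ((D ^ b') ((D ^ e') ((X ^ d') (toS hφ))))) p := by
      simp [ev, WT_tmul]
    rw [hev]
    refine (WB_norm_le hθ (h1 a b e d) (h2 a' b' e' d') p).trans ?_
    have wa := w_mul_le hα0 a a'
    have wb := w_mul_le hα0 b b'
    have we := w_mul_le hα0 e e'
    have wd := w_mul_le hα0 d d'
    rw [ha] at wa
    rw [hb] at wb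
    rw [he] at we
    rw [hd] at wd
    have q1 : M1 ^ (a + b + e + d) ≤ M1 ^ (n₁ + n₂ + m₁ + m₂) := pow_le_pow_right₀ hM1 (by omega)
    have q2 : M2 ^ (a' + b' + e' + d') ≤ M2 ^ (n₁ + n₂ + m₁ + m₂) :=
      pow_le_pow_right₀ hM2 (by omega)
    have := w_nonneg α a
    have := w_nonneg α a'
    have := w_nonneg α b
    have := w_nonneg α b'
    have := w_nonneg α e
    have := w_nonneg α e'
    have := w_nonneg α d
    have := w_nonneg α d'
    have := w_nonneg α m₁
    have := w_nonneg α m₂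
    have := w_nonneg α n₁
    have := w_nonneg α n₂
    calc _ = I0 * C1 * C2 * (M1 ^ (a + b + e + d) * M2 ^ (a' + b' + e' + d')) *
          ((w α e * w α e') * (w α d * w α d') * (w α a * w α a') * (w α b * w α b')) := by ring
      _ ≤ I0 * C1 * C2 * (M1 ^ (n₁ + n₂ + m₁ + m₂) * M2 ^ (n₁ + n₂ + m₁ + m₂)) *
          (w α n₁ * w α n₂ * w α m₁ * w α m₂) := by gcongr
      _ = K := by rw [hK, mul_pow]
  have hfin : ‖ev ((Mt ^ m₁) ((Mx θ ^ m₂) ((Dt ^ n₁) ((Dx θ ^ n₂) (toS hψ ⊗ₜ toS hφ)))))‖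
      ≤ r4 ^ n₂ * (r3 ^ n₁ * (r2 ^ m₂ * (r1 ^ m₁ * K))) := by
    refine op_bound _ X _ X (ev ∘ₗ (Mt ^ m₁) ∘ₗ (Mx θ ^ m₂) ∘ₗ (Dt ^ n₁)) _ n₂ _ _
      fun d d' hd => ?_
    refine op_bound _ D _ D (ev ∘ₗ (Mt ^ m₁) ∘ₗ (Mx θ ^ m₂)) _ n₁ _ _ fun e e' he => ?_
    refine op_bound _ D _ D (ev ∘ₗ (Mt ^ m₁)) _ m₂ _ _ fun b b' hb => ?_
    refine op_bound _ X _ X ev _ m₁ _ _ fun a a' ha => ?_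
    exact hmain d d' hd e e' he b b' hb a a' ha
  have hfin' : ‖WT hθ ((Mt ^ m₁) ((Mx θ ^ m₂) ((Dt ^ n₁) ((Dx θ ^ n₂) (toS hψ ⊗ₜ toS hφ))))) p‖
      ≤ r4 ^ n₂ * (r3 ^ n₁ * (r2 ^ m₂ * (r1 ^ m₁ * K))) := hfin
  have := w_nonneg α m₁
  have := w_nonneg α m₂
  have := w_nonneg α n₁
  have := w_nonneg α n₂
  have hK0 : 0 ≤ K := by positivity
  have g1 : r1 ≤ R := by linarith
  have g2 : r2 ≤ R := by linarith
  have g3 : r3 ≤ R := by linarith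
  have g4 : r4 ≤ R := by linarith
  have hR0 : 0 < R := by linarith
  calc _ ≤ ‖c‖ * (r4 ^ n₂ * (r3 ^ n₁ * (r2 ^ m₂ * (r1 ^ m₁ * K)))) := by gcongr
    _ ≤ ‖c‖ * (R ^ n₂ * (R ^ n₁ * (R ^ m₂ * (R ^ m₁ * K)))) := by gcongr
    _ = (‖c‖ * I0 * C1 * C2) * (R * (M1 * M2)) ^ (n₁ + n₂ + m₁ + m₂) *
        w α n₁ * w α n₂ * w α m₁ * w α m₂ := by
      rw [hK, mul_pow R, pow_add R, pow_add R, pow_add R]; ring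
    _ ≤ (‖c‖ * I0 * C1 * C2 + 1) * (R * (M1 * M2)) ^ (n₁ + n₂ + m₁ + m₂) *
        (n₁ : ℝ) ^ (α * (n₁ : ℝ)) * (n₂ : ℝ) ^ (α * (n₂ : ℝ)) * (m₁ : ℝ) ^ (α * (m₁ : ℝ)) *
          (m₂ : ℝ) ^ (α * (m₂ : ℝ)) := by
      have a1 := w_le_pow hα0 n₁
      have a2 := w_le_pow hα0 n₂
      have a3 := w_le_pow hα0 m₁
      have a4 := w_le_pow hα0 m₂
      gcongr
      linarith

end WigGS

/-- for `ψ, φ ∈ S^α_α(ℝ)` the Wigner distribution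
`W(t,x) = (1/2π) ∫ e^{ikx} ψ(t − θk/2) conj(φ(t + θk/2)) dk` is given by an
absolutely convergent integral and belongs to `S^α_α(ℝ²)`. -/
theorem wigner_gelfandShilov (α θ : ℝ) (hα : 1 / 2 ≤ α) (hθ : 0 < θ)
    (ψ φ : ℝ → ℂ) (hψ : GelfandShilov α ψ) (hφ : GelfandShilov α φ) :
    (∀ t x : ℝ, Integrable (fun k : ℝ =>
        Complex.exp (Complex.I * (k : ℂ) * (x : ℂ)) * ψ (t - θ * k / 2) *
          (starRingEnd ℂ) (φ (t + θ * k / 2))))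
      ∧ GelfandShilov2 α (fun p : ℝ × ℝ =>
          ((1 / (2 * Real.pi) : ℝ) : ℂ) *
            ∫ k : ℝ, Complex.exp (Complex.I * (k : ℂ) * (p.2 : ℂ)) *
              ψ (p.1 - θ * k / 2) * (starRingEnd ℂ) (φ (p.1 + θ * k / 2))) := by
  have hφ' := WigGS.GelfandShilov_conj hφ
  refine ⟨fun t x => WigGS.Wk_integrable hθ (WigGS.toS hψ) (WigGS.toS hφ') (t, x), ?_⟩
  have h := WigGS.main_bound hα hθ hψ hφ' ((1 / (2 * Real.pi) : ℝ) : ℂ)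
  rw [map_smul, WigGS.WT_tmul] at h
  exact h
end

section
/- Let E′ > 0. For every 𝓔 ∈ ℝ and every ε > 0 there exists a smooth compactly supported function φ: ℝ → ℂ with ‖φ‖_{L²(ℝ)} = 1 and ‖−½φ'' − (E′²/2)q²φ − 𝓔φ‖_{L²(ℝ)} ≤ ε. In other words, every real number is an approximate eigenvalue, so the spectrum of the inverted harmonic oscillator H = ½(−∂_q² − E′²q²) is all of ℝ. -/
open MeasureTheory Filter Complex

namespace InvOsc

lemma lint_inv {A B : ℝ} (hA : 0 < A) (hAB : A ≤ B) :
    ∫⁻ q in Set.Ioc A B, ENNReal.ofReal q⁻¹ = ENNReal.ofReal (Real.log (B / A)) := by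
  have hi : IntervalIntegrable (fun q : ℝ => q⁻¹) volume A B := by
    apply intervalIntegral.intervalIntegrable_inv
    · intro x hx
      rw [Set.uIcc_of_le hAB] at hx
      exact (lt_of_lt_of_le hA hx.1).ne'
    · exact continuousOn_id
  rw [← integral_inv_of_pos hA (hA.trans_le hAB), intervalIntegral.integral_of_le hAB,
    ofReal_integral_eq_lintegral_ofReal]
  · exact (intervalIntegrable_iff_integrableOn_Ioc_of_le hAB).1 hi
  · filter_upwards [ae_restrict_mem measurableSet_Ioc] with x hx
    exact inv_nonneg.2 (hA.trans hx.1).le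

lemma eLpNorm_sq (f : ℝ → ℂ) :
    eLpNorm f 2 volume ^ 2 = ∫⁻ q, ‖f q‖ₑ ^ 2 := by
  have := eLpNorm_nnreal_pow_eq_lintegral (f := f) (μ := volume) (p := 2) (by norm_num)
  simpa using this

/-- the main cutoff facts -/
lemma bump : ∃ (H : ℝ → ℝ) (M : ℝ), ContDiff ℝ (⊤ : ℕ∞) H ∧ 0 ≤ M ∧
    (∀ s, |s| ≤ 1 → H s = 1) ∧
    (∀ s, 2 < |s| → H s = 0 ∧ deriv H s = 0 ∧ deriv (deriv H) s = 0) ∧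
    (∀ s, |H s| ≤ M ∧ |deriv H s| ≤ M ∧ |deriv (deriv H) s| ≤ M) := by
  let b : ContDiffBump (0 : ℝ) := ⟨1, 2, by norm_num, by norm_num⟩
  have hc : ContDiff ℝ (⊤ : ℕ∞) (b : ℝ → ℝ) := b.contDiff
  have hc1 : ContDiff ℝ (⊤ : ℕ∞) (deriv (b : ℝ → ℝ)) := by
    have := (contDiff_infty_iff_deriv (𝕜 := ℝ) (f := (b : ℝ → ℝ))).1 hc
    exact this.2
  have hc2 : ContDiff ℝ (⊤ : ℕ∞) (deriv (deriv (b : ℝ → ℝ))) := by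
    have := (contDiff_infty_iff_deriv (𝕜 := ℝ) (f := deriv (b : ℝ → ℝ))).1 hc1
    exact this.2
  have s0 : HasCompactSupport (b : ℝ → ℝ) := b.hasCompactSupport
  have t0 : tsupport (b : ℝ → ℝ) = Metric.closedBall 0 2 := b.tsupport_eq
  obtain ⟨M0, h0⟩ := s0.exists_bound_of_continuous hc.continuous
  obtain ⟨M1, h1⟩ := s0.deriv.exists_bound_of_continuous hc1.continuous
  obtain ⟨M2, h2⟩ := s0.deriv.deriv.exists_bound_of_continuous hc2.continuous
  refine ⟨b, max M0 (max M1 M2), hc, ?_, ?_, ?_, ?_⟩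
  · exact le_trans (norm_nonneg _) ((h0 0).trans (le_max_left _ _))
  · intro s hs
    exact b.one_of_mem_closedBall (by simpa using hs)
  · intro s hs
    have hn : s ∉ tsupport (b : ℝ → ℝ) := by
      rw [t0]; simpa using hs
    have hn1 : s ∉ tsupport (deriv (b : ℝ → ℝ)) := fun h => hn (tsupport_deriv_subset h)
    have hn2 : s ∉ tsupport (deriv (deriv (b : ℝ → ℝ))) := fun h => hn1 (tsupport_deriv_subset h)
    exact ⟨image_eq_zero_of_notMem_tsupport hn, image_eq_zero_of_notMem_tsupport hn1,
      image_eq_zero_of_notMem_tsupport hn2⟩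
  · intro s
    exact ⟨(h0 s).trans (le_max_left _ _),
      (h1 s).trans ((le_max_left _ _).trans (le_max_right _ _)),
      (h2 s).trans ((le_max_right _ _).trans (le_max_right _ _))⟩

noncomputable def U (w : ℝ) (a : ℂ) (q : ℝ) : ℂ :=
  Complex.exp (I * (w / 2 : ℂ) * (q : ℂ) ^ 2 + a * (Real.log q : ℂ))

lemma U_deriv (w : ℝ) (a : ℂ) {q : ℝ} (hq : 0 < q) :
    HasDerivAt (U w a) ((I * w * q + a * (q : ℂ)⁻¹) * U w a q) q := by
  have hl : HasDerivAt (fun x : ℝ => (Real.log x : ℂ)) ((q⁻¹ : ℝ) : ℂ) q :=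
    (Real.hasDerivAt_log hq.ne').ofReal_comp
  have hid : HasDerivAt (fun x : ℝ => (x : ℂ)) 1 q := by
    simpa using (hasDerivAt_id q).ofReal_comp
  have := (((hid.pow 2).const_mul (I * (w / 2 : ℂ))).add (hl.const_mul a)).cexp
  refine HasDerivAt.congr_deriv this ?_
  simp only [U, Pi.add_apply, Pi.pow_apply]
  push_cast
  ring

lemma cut_deriv {H : ℝ → ℝ} (hH : Differentiable ℝ H) (n : ℝ) {q : ℝ} (hq : 0 < q) :
    HasDerivAt (fun x : ℝ => ((H (Real.log x / n - 3) : ℝ) : ℂ))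
      ((deriv H (Real.log q / n - 3) : ℝ) * (q : ℂ)⁻¹ * (n : ℂ)⁻¹) q := by
  have h1 : HasDerivAt (fun x : ℝ => Real.log x / n - 3) (q⁻¹ / n) q :=
    ((Real.hasDerivAt_log hq.ne').div_const n).sub_const 3
  have h2 := ((hH _).hasDerivAt.comp q h1).ofReal_comp
  refine HasDerivAt.congr_deriv h2 ?_
  push_cast
  ring

noncomputable def F (H : ℝ → ℝ) (n w : ℝ) (a : ℂ) (q : ℝ) : ℂ :=
  U w a q * ((H (Real.log q / n - 3) : ℝ) : ℂ)

noncomputable def F1 (H : ℝ → ℝ) (n w : ℝ) (a : ℂ) (q : ℝ) : ℂ :=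
  U w a q * ((I * w * q + a * (q : ℂ)⁻¹) * ((H (Real.log q / n - 3) : ℝ) : ℂ)
    + (deriv H (Real.log q / n - 3) : ℝ) * (q : ℂ)⁻¹ * (n : ℂ)⁻¹)

lemma F_deriv {H : ℝ → ℝ} (hH : Differentiable ℝ H) (n w : ℝ) (a : ℂ) {q : ℝ} (hq : 0 < q) :
    HasDerivAt (F H n w a) (F1 H n w a q) q := by
  refine HasDerivAt.congr_deriv ((U_deriv w a hq).mul (cut_deriv hH n hq)) ?_
  simp only [F1]; ring

lemma F1_deriv {H : ℝ → ℝ} (hH : Differentiable ℝ H) (hH1 : Differentiable ℝ (deriv H))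
    (n w : ℝ) (a : ℂ) {q : ℝ} (hq : 0 < q) :
    HasDerivAt (F1 H n w a)
      (U w a q * (((I * w * q + a * (q : ℂ)⁻¹) ^ 2 + I * w - a * (q : ℂ)⁻¹ ^ 2) *
          ((H (Real.log q / n - 3) : ℝ) : ℂ)
        + (2 * (I * w * q + a * (q : ℂ)⁻¹) * (q : ℂ)⁻¹ * (n : ℂ)⁻¹ - (q : ℂ)⁻¹ ^ 2 * (n : ℂ)⁻¹) *
          (deriv H (Real.log q / n - 3) : ℝ)
        + (q : ℂ)⁻¹ ^ 2 * (n : ℂ)⁻¹ ^ 2 * (deriv (deriv H) (Real.log q / n - 3) : ℝ))) q := by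
  have hid : HasDerivAt (fun x : ℝ => (x : ℂ)) 1 q := by
    simpa using (hasDerivAt_id q).ofReal_comp
  have hq' : (q : ℂ) ≠ 0 := by exact_mod_cast hq.ne'
  have hinv : HasDerivAt (fun x : ℝ => (x : ℂ)⁻¹) (-1 / (q : ℂ) ^ 2) q := hid.inv hq'
  have := (U_deriv w a hq).mul ((((hid.const_mul (I * w)).add (hinv.const_mul a)).mul
    (cut_deriv hH n hq)).add (((cut_deriv hH1 n hq).mul hinv).mul_const (n : ℂ)⁻¹))
  refine HasDerivAt.congr_deriv this ?_
  simp only [Pi.add_apply, Pi.mul_apply]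
  field_simp
  ring

/-- the error factor -/
noncomputable def Er (H : ℝ → ℝ) (n w : ℝ) (a : ℂ) (q : ℝ) : ℂ :=
  -(I * w) * (n : ℂ)⁻¹ * (deriv H (Real.log q / n - 3) : ℝ)
  - (q : ℂ)⁻¹ ^ 2 * ((a - 1 / 2) * (n : ℂ)⁻¹ * (deriv H (Real.log q / n - 3) : ℝ)
    + (1 / 2) * (n : ℂ)⁻¹ ^ 2 * (deriv (deriv H) (Real.log q / n - 3) : ℝ)
    + (a ^ 2 - a) / 2 * (H (Real.log q / n - 3) : ℝ))

lemma U_norm (w g : ℝ) {q : ℝ} (hq : 0 < q) :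
    ‖U w (-1 / 2 + I * g) q‖ ^ 2 = q⁻¹ := by
  rw [U, Complex.norm_exp, ← Real.exp_nat_mul]
  have : ((2 : ℕ) : ℝ) * (I * (w / 2 : ℂ) * (q : ℂ) ^ 2 + (-1 / 2 + I * g) * (Real.log q : ℂ)).re
      = - Real.log q := by
    have h : (I * (w / 2 : ℂ) * (q : ℂ) ^ 2 + (-1 / 2 + I * g) * (Real.log q : ℂ))
      = ((-1 / 2 * Real.log q : ℝ) : ℂ) + ((w / 2 * q ^ 2 + g * Real.log q : ℝ) : ℂ) * I := by
      push_cast; ring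
    rw [h]
    simp only [add_re, re_ofReal_mul, ofReal_re, I_re]
    push_cast; ring
  rw [this, Real.exp_neg, Real.exp_log hq]

noncomputable def Psi (H : ℝ → ℝ) (n w : ℝ) (a : ℂ) (q : ℝ) : ℂ :=
  if 0 < q then F H n w a q else 0

section
variable {H : ℝ → ℝ} {n w : ℝ} {a : ℂ}

lemma Psi_pos {q : ℝ} (hq : 0 < q) : Psi H n w a =ᶠ[nhds q] F H n w a := by
  filter_upwards [lt_mem_nhds hq] with x hx
  simp [Psi, hx]

lemma Psi_small (hn : 1 ≤ n) (hz : ∀ s, 2 < |s| → H s = 0) {q : ℝ} (hq : q < 1) :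
    Psi H n w a =ᶠ[nhds q] fun _ => 0 := by
  filter_upwards [gt_mem_nhds hq] with x hx
  by_cases h0 : 0 < x
  · have hl : Real.log x / n ≤ 0 :=
      div_nonpos_of_nonpos_of_nonneg (Real.log_nonpos h0.le hx.le) (by linarith)
    have : H (Real.log x / n - 3) = 0 := by
      apply hz
      rw [abs_of_neg (by linarith)]
      linarith
    simp [Psi, F, this]
  · simp [Psi, h0]

lemma Psi_smooth (hH : ContDiff ℝ (⊤ : ℕ∞) H) (hn : 1 ≤ n) (hz : ∀ s, 2 < |s| → H s = 0) :
    ContDiff ℝ (⊤ : ℕ∞) (Psi H n w a) := by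
  rw [contDiff_iff_contDiffAt]
  intro q
  rcases lt_or_ge q 1 with h | h
  · exact contDiffAt_const.congr_of_eventuallyEq (Psi_small hn hz h)
  · have hq : 0 < q := by linarith
    refine ContDiffAt.congr_of_eventuallyEq ?_ (Psi_pos hq)
    have hlog : ContDiffAt ℝ (⊤ : ℕ∞) Real.log q := Real.contDiffAt_log.2 hq.ne'
    have hof : ContDiff ℝ (⊤ : ℕ∞) (fun x : ℝ => (x : ℂ)) := ofRealCLM.contDiff
    have hlogc : ContDiffAt ℝ (⊤ : ℕ∞) (fun x : ℝ => (Real.log x : ℂ)) q :=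
      hof.contDiffAt.comp q hlog
    have hcut : ContDiffAt ℝ (⊤ : ℕ∞) (fun x : ℝ => ((H (Real.log x / n - 3) : ℝ) : ℂ)) q :=
      hof.contDiffAt.comp q (hH.contDiffAt.comp q ((hlog.div_const n).sub contDiffAt_const))
    have hU : ContDiffAt ℝ (⊤ : ℕ∞) (U w a) q := by
      apply ContDiffAt.cexp
      exact (contDiffAt_const.mul (hof.contDiffAt.pow 2)).add (contDiffAt_const.mul hlogc)
    exact hU.mul hcut

lemma large_zero (hn : 1 ≤ n) {q : ℝ} (h : 5 * n < Real.log q) :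
    2 < |Real.log q / n - 3| := by
  have : 5 < Real.log q / n := by rw [lt_div_iff₀ (by linarith)]; exact h
  rw [abs_of_pos (by linarith)]; linarith

lemma small_zero (hn : 1 ≤ n) {q : ℝ} (h : Real.log q < n) :
    2 < |Real.log q / n - 3| := by
  have : Real.log q / n < 1 := by rw [div_lt_iff₀ (by linarith)]; linarith
  rw [abs_of_neg (by linarith)]; linarith

lemma Psi_supp (hn : 1 ≤ n) (hz : ∀ s, 2 < |s| → H s = 0) :
    HasCompactSupport (Psi H n w a) := by
  apply HasCompactSupport.of_support_subset_isCompact (isCompact_Icc (a := 0) (b := Real.exp (5 * n)))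
  intro q hq
  by_cases h0 : 0 < q
  · refine ⟨h0.le, ?_⟩
    by_contra! hlt
    apply hq
    have := hz _ (large_zero hn ((Real.lt_log_iff_exp_lt h0).2 hlt))
    simp [Psi, F, this]
  · exact absurd (by simp [Psi, h0]) hq

/-- the operator -/
noncomputable def Op (w e : ℝ) (φ : ℝ → ℂ) (q : ℝ) : ℂ :=
  -(1 / 2 : ℂ) * deriv (deriv φ) q
            - ((w ^ 2 / 2 : ℝ) : ℂ) * (q : ℂ) ^ 2 * φ q - (e : ℂ) * φ q

lemma Op_zero (e : ℝ) (hn : 1 ≤ n) (hz : ∀ s, 2 < |s| → H s = 0) {q : ℝ} (hq : q < 1) :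
    Op w e (Psi H n w a) q = 0 := by
  have h := Psi_small (w := w) (a := a) hn hz hq
  have h2 := h.deriv.deriv_eq
  simp only [Op, h2, h.eq_of_nhds]
  simp

lemma Op_pos (hw : 0 < w) (e : ℝ) (hH : ContDiff ℝ (⊤ : ℕ∞) H) {q : ℝ} (hq : 0 < q) :
    Op w e (Psi H n w (-1 / 2 + I * (e / w : ℝ))) q =
      U w (-1 / 2 + I * (e / w : ℝ)) q * Er H n w (-1 / 2 + I * (e / w : ℝ)) q := by
  have hd : Differentiable ℝ H := hH.differentiable (by simp)
  have hd1 : Differentiable ℝ (deriv H) :=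
    ((contDiff_infty_iff_deriv (𝕜 := ℝ)).1 hH).2.differentiable (by simp)
  set a : ℂ := -1 / 2 + I * (e / w : ℝ) with ha
  have h1 : deriv (Psi H n w a) =ᶠ[nhds q] F1 H n w a := by
    filter_upwards [lt_mem_nhds hq] with x hx
    rw [(Psi_pos hx).deriv_eq]
    exact (F_deriv hd n w a hx).deriv
  have h2 := h1.deriv_eq.trans (F1_deriv hd hd1 n w a hq).deriv
  have hq' : (q : ℂ) ≠ 0 := by exact_mod_cast hq.ne'
  have hw' : (w : ℂ) ≠ 0 := by exact_mod_cast hw.ne'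
  have he : (e : ℂ) = -(I * w * a) - I * w / 2 := by
    rw [ha]; push_cast; field_simp; ring_nf; simp
  simp only [Op, h2, (Psi_pos hq).eq_of_nhds, F, Er]
  rw [he]
  have hqq : (q : ℂ) * (q : ℂ)⁻¹ = 1 := mul_inv_cancel₀ hq'
  generalize (q : ℂ)⁻¹ = r at *
  generalize (n : ℂ)⁻¹ = m at *
  push_cast
  have hI := I_sq
  generalize I = j at *
  generalize U w a q = u at *
  generalize ((H (Real.log q / n - 3) : ℝ) : ℂ) = x0 at *
  generalize ((deriv H (Real.log q / n - 3) : ℝ) : ℂ) = x1 at *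
  linear_combination (-(1/2) * u * x0 * w^2 * q^2) * hI
    + (-(u * x0 * j * w * a) - u * x1 * j * w * m) * hqq

lemma Er_zero {q : ℝ} (h : 2 < |Real.log q / n - 3|)
    (hz : ∀ s, 2 < |s| → H s = 0 ∧ deriv H s = 0 ∧ deriv (deriv H) s = 0) :
    Er H n w a q = 0 := by
  obtain ⟨h0, h1, h2⟩ := hz _ h
  simp [Er, h0, h1, h2]

lemma Er_bound {M : ℝ} (hn : 1 ≤ n) (hw : 0 < w)
    (hz : ∀ s, 2 < |s| → H s = 0 ∧ deriv H s = 0 ∧ deriv (deriv H) s = 0)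
    (hM0 : 0 ≤ M)
    (hM : ∀ s, |H s| ≤ M ∧ |deriv H s| ≤ M ∧ |deriv (deriv H) s| ≤ M) {q : ℝ} (hq : 0 < q) :
    ‖Er H n w a q‖ ≤ (M * (w + ‖a - 1 / 2‖ + 1 / 2 + ‖(a ^ 2 - a) / 2‖)) / n := by
  have hn0 : 0 < n := by linarith
  rcases lt_or_ge (Real.log q) n with h | h
  · rw [Er_zero (small_zero hn h) hz, norm_zero]; positivity
  obtain ⟨h0, h1, h2⟩ := hM (Real.log q / n - 3)
  have hqn : n ≤ q := by
    have := (Real.le_log_iff_exp_le hq).1 h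
    linarith [Real.add_one_le_exp n]
  have hn1 : n⁻¹ ≤ 1 := inv_le_one_of_one_le₀ hn
  have hni : 0 < n⁻¹ := by positivity
  have hqi : q⁻¹ ^ 2 ≤ n⁻¹ := by
    have h1 : q⁻¹ ≤ n⁻¹ := by gcongr
    have h2 : 0 < q⁻¹ := by positivity
    nlinarith
  unfold Er
  generalize H (Real.log q / n - 3) = x0 at *
  generalize deriv H (Real.log q / n - 3) = x1 at *
  generalize deriv (deriv H) (Real.log q / n - 3) = x2 at *
  have key : ‖-(I * w) * (n : ℂ)⁻¹ * (x1 : ℂ) - (q : ℂ)⁻¹ ^ 2 * ((a - 1 / 2) * (n : ℂ)⁻¹ * (x1 : ℂ)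
    + (1 / 2) * (n : ℂ)⁻¹ ^ 2 * (x2 : ℂ) + (a ^ 2 - a) / 2 * (x0 : ℂ))‖ ≤
    w * n⁻¹ * |x1| + q⁻¹ ^ 2 * (‖a - 1 / 2‖ * n⁻¹ * |x1| + 1 / 2 * n⁻¹ ^ 2 * |x2|
      + ‖(a ^ 2 - a) / 2‖ * |x0|) := by
    refine (norm_sub_le _ _).trans ?_
    have e1 : ‖-(I * w) * (n : ℂ)⁻¹ * (x1 : ℂ)‖ = w * n⁻¹ * |x1| := by
      simp [abs_of_pos hw, abs_of_pos hn0]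
    have e2 : ‖(q : ℂ)⁻¹ ^ 2‖ = q⁻¹ ^ 2 := by simp
    rw [e1, norm_mul, e2]
    gcongr
    refine (norm_add₃_le).trans ?_
    rw [norm_mul, norm_mul, norm_mul, norm_mul, norm_mul]
    simp [abs_of_pos hn0]
  refine key.trans ?_
  calc _ ≤ w * n⁻¹ * M + n⁻¹ * (‖a - 1 / 2‖ * 1 * M + 1 / 2 * 1 ^ 2 * M
      + ‖(a ^ 2 - a) / 2‖ * M) := by gcongr
    _ = _ := by field_simp; ring

end

lemma quasi (w : ℝ) (hw : 0 < w) (e ε : ℝ) (hε : 0 < ε) :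
    ∃ ψ : ℝ → ℂ, ContDiff ℝ (⊤ : ℕ∞) ψ ∧ HasCompactSupport ψ ∧ eLpNorm ψ 2 volume ≠ 0 ∧
      eLpNorm (Op w e ψ) 2 volume ≤ ENNReal.ofReal ε * eLpNorm ψ 2 volume := by
  obtain ⟨H, M, hH, hM0, hone, hz, hM⟩ := bump
  set a : ℂ := -1 / 2 + I * (e / w : ℝ) with ha
  set C : ℝ := M * (w + ‖a - 1 / 2‖ + 1 / 2 + ‖(a ^ 2 - a) / 2‖) with hC
  have hC0 : 0 ≤ C := by positivity
  set n : ℝ := 1 + 2 * C / ε with hndef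
  have hn : 1 ≤ n := by
    have : 0 ≤ 2 * C / ε := by positivity
    linarith
  have hn0 : 0 < n := by linarith
  have hCn : 2 * C ≤ ε * n := by
    rw [hndef]; field_simp; linarith
  have hz0 : ∀ s, 2 < |s| → H s = 0 := fun s hs => (hz s hs).1
  have low : ENNReal.ofReal (2 * n) ≤ eLpNorm (Psi H n w a) 2 volume ^ 2 := by
    rw [eLpNorm_sq]
    calc ENNReal.ofReal (2 * n)
        = ∫⁻ q in Set.Ioc (Real.exp (2 * n)) (Real.exp (4 * n)), ENNReal.ofReal q⁻¹ := by
          rw [lint_inv (Real.exp_pos _) (Real.exp_le_exp.2 (by linarith)), ← Real.exp_sub,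
            Real.log_exp]
          congr 1; ring
      _ = ∫⁻ q in Set.Ioc (Real.exp (2 * n)) (Real.exp (4 * n)), ‖Psi H n w a q‖ₑ ^ 2 := by
          refine setLIntegral_congr_fun measurableSet_Ioc ?_
          intro q hq
          have hq0 : 0 < q := (Real.exp_pos _).trans hq.1
          have l1 : 2 * n < Real.log q := (Real.lt_log_iff_exp_lt hq0).2 hq.1
          have l2 : Real.log q ≤ 4 * n := (Real.log_le_iff_le_exp hq0).2 hq.2
          have : H (Real.log q / n - 3) = 1 := by
            apply hone
            have k1 : 2 < Real.log q / n := by rw [lt_div_iff₀ hn0]; exact l1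
            have k2 : Real.log q / n ≤ 4 := by rw [div_le_iff₀ hn0]; exact l2
            rw [abs_le]; constructor <;> linarith
          have h3 : ‖Psi H n w a q‖ ^ 2 = q⁻¹ := by
            simp only [Psi, hq0, if_true, F, this]
            rw [ofReal_one, mul_one]
            exact U_norm w _ hq0
          simp only
          rw [← h3, ENNReal.ofReal_pow (norm_nonneg _), ofReal_norm]
      _ ≤ _ := setLIntegral_le_lintegral _ _
  have up : eLpNorm (Op w e (Psi H n w a)) 2 volume ^ 2 ≤ ENNReal.ofReal ((C / n) ^ 2 * (6 * n)) := by
    rw [eLpNorm_sq]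
    calc ∫⁻ q, ‖Op w e (Psi H n w a) q‖ₑ ^ 2
        ≤ ∫⁻ q, (Set.Ioc 1 (Real.exp (6 * n))).indicator
            (fun q => ENNReal.ofReal ((C / n) ^ 2) * ENNReal.ofReal q⁻¹) q := by
          refine lintegral_mono fun q => ?_
          by_cases hmem : q ∈ Set.Ioc 1 (Real.exp (6 * n))
          · rw [Set.indicator_of_mem hmem]
            have hq0 : 0 < q := by linarith [hmem.1]
            rw [Op_pos hw e hH hq0, ← ofReal_norm, ← ENNReal.ofReal_pow (norm_nonneg _),
              ← ENNReal.ofReal_mul (by positivity), norm_mul, mul_pow, U_norm w _ hq0, mul_comm]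
            have := Er_bound (a := a) hn hw hz hM0 hM hq0
            apply ENNReal.ofReal_le_ofReal
            have hqi : 0 ≤ q⁻¹ := by positivity
            exact mul_le_mul_of_nonneg_right (pow_le_pow_left₀ (norm_nonneg _) this 2) hqi
          · have : Op w e (Psi H n w a) q = 0 := by
              rcases le_or_gt q 0 with h0 | h0
              · exact Op_zero e hn hz0 (by linarith)
              · rw [Op_pos hw e hH h0]
                have : Er H n w a q = 0 := by
                  rcases le_or_gt q 1 with h1 | h1
                  · exact Er_zero (small_zero hn (by linarith [Real.log_nonpos h0.le h1])) hz
                  · have : Real.exp (6 * n) < q := by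
                      by_contra! hh
                      exact hmem ⟨h1, hh⟩
                    have := (Real.lt_log_iff_exp_lt h0).2 this
                    exact Er_zero (large_zero hn (by linarith)) hz
                rw [this, mul_zero]
            simp [this]
      _ = _ := by
          rw [lintegral_indicator measurableSet_Ioc, lintegral_const_mul' _ _ ENNReal.ofReal_ne_top,
            lint_inv one_pos (Real.one_le_exp (by linarith)), div_one, Real.log_exp,
            ← ENNReal.ofReal_mul (by positivity)]
  refine ⟨Psi H n w a, Psi_smooth hH hn hz0, Psi_supp hn hz0, ?_, ?_⟩
  · intro h0
    rw [h0] at low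
    simp at low
    linarith
  · have : eLpNorm (Op w e (Psi H n w a)) 2 volume ^ 2 ≤
        (ENNReal.ofReal ε * eLpNorm (Psi H n w a) 2 volume) ^ 2 := by
      refine up.trans ?_
      rw [mul_pow, ← ENNReal.ofReal_pow hε.le]
      refine le_trans ?_ (mul_le_mul_right low _)
      rw [← ENNReal.ofReal_mul (by positivity)]
      apply ENNReal.ofReal_le_ofReal
      have h4 : (2 * C) ^ 2 ≤ (ε * n) ^ 2 := pow_le_pow_left₀ (by positivity) hCn 2
      have : (C / n) ^ 2 * (6 * n) = 6 * C ^ 2 / n := by field_simp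
      rw [this, div_le_iff₀ hn0]
      nlinarith [sq_nonneg C]
    exact (ENNReal.pow_le_pow_left_iff two_ne_zero).1 this

end InvOsc

/-- every real number `𝓔` is an approximate eigenvalue of the
inverted harmonic oscillator `H = ½(−∂_q² − E′²q²)`: there are smooth
compactly supported, `L²`-normalized functions `φ` with
`‖Hφ − 𝓔φ‖_{L²} ≤ ε`.  Hence the spectrum of `H` is all of `ℝ`. -/
theorem inverted_oscillator_spectrum (E' : ℝ) (hE' : 0 < E') (e ε : ℝ)
    (hε : 0 < ε) :
    ∃ φ : ℝ → ℂ, ContDiff ℝ (⊤ : ℕ∞) φ ∧ HasCompactSupport φ ∧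
      eLpNorm φ 2 volume = 1 ∧
      eLpNorm (fun q : ℝ =>
          -(1 / 2 : ℂ) * deriv (deriv φ) q
            - ((E' ^ 2 / 2 : ℝ) : ℂ) * (q : ℂ) ^ 2 * φ q - (e : ℂ) * φ q)
        2 volume ≤ ENNReal.ofReal ε := by
  obtain ⟨ψ, hs, hc, hne, hle⟩ := InvOsc.quasi E' hE' e ε hε
  have hfin : eLpNorm ψ 2 volume ≠ ⊤ := (hs.continuous.memLp_of_hasCompactSupport hc).2.ne
  set N := eLpNorm ψ 2 volume with hN
  have hNr : 0 < N.toReal := ENNReal.toReal_pos hne hfin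
  have hnorm : ‖((N.toReal⁻¹ : ℝ) : ℂ)‖ₑ = N⁻¹ := by
    rw [← ofReal_norm, Complex.norm_real, Real.norm_of_nonneg (by positivity),
      ENNReal.ofReal_inv_of_pos hNr, ENNReal.ofReal_toReal hfin]
  refine ⟨((N.toReal⁻¹ : ℝ) : ℂ) • ψ, contDiff_const.smul hs, hc.smul_left, ?_, ?_⟩
  · rw [eLpNorm_const_smul, hnorm, ← hN]
    exact ENNReal.inv_mul_cancel hne hfin
  · have hd : deriv (deriv (((N.toReal⁻¹ : ℝ) : ℂ) • ψ)) = ((N.toReal⁻¹ : ℝ) : ℂ) • deriv (deriv ψ) := by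
      have h1 : deriv (((N.toReal⁻¹ : ℝ) : ℂ) • ψ) = ((N.toReal⁻¹ : ℝ) : ℂ) • deriv ψ := by
        funext x; exact deriv_const_smul_field _ _
      rw [h1]
      funext x; exact deriv_const_smul_field _ _
    have : (fun q : ℝ =>
          -(1 / 2 : ℂ) * deriv (deriv (((N.toReal⁻¹ : ℝ) : ℂ) • ψ)) q
            - ((E' ^ 2 / 2 : ℝ) : ℂ) * (q : ℂ) ^ 2 * (((N.toReal⁻¹ : ℝ) : ℂ) • ψ) q
            - (e : ℂ) * (((N.toReal⁻¹ : ℝ) : ℂ) • ψ) q)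
        = ((N.toReal⁻¹ : ℝ) : ℂ) • InvOsc.Op E' e ψ := by
      funext q
      rw [hd]
      simp only [InvOsc.Op, Pi.smul_apply, smul_eq_mul]
      ring
    rw [this, eLpNorm_const_smul, hnorm]
    calc N⁻¹ * eLpNorm (InvOsc.Op E' e ψ) 2 volume ≤ N⁻¹ * (ENNReal.ofReal ε * N) := by gcongr
      _ = ENNReal.ofReal ε := by
        rw [mul_comm, mul_assoc, ENNReal.mul_inv_cancel hne hfin, mul_one]
end
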